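/- arXiv:2405.10797 — 7 statements merged into one kernel-verified Lean document; each statement's English description precedes it below -/
import Mathlib

section
/- The convex hull Δ in ℝ⁴ of the eight points (0,0,0,0), (1,0,0,0), (0,1,0,0), (0,0,1,0), (0,0,0,1), (0,1,0,1), (0,1,1,0), (0,0,0,2) has 4-dimensional Lebesgue measure 5/24. -/
open MeasureTheory

/-- The Okounkov body Δ of the quintic Del Pezzo fourfold `M₄`:
the convex hull in ℝ⁴ of the eight points
(0,0,0,0), (1,0,0,0), (0,1,0,0), (0,0,1,0), (0,0,0,1), (0,1,0,1), (0,1,1,0), (0,0,0,2). -/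
noncomputable def DeltaM4 : Set (Fin 4 → ℝ) :=
  convexHull ℝ
    ({![0,0,0,0], ![1,0,0,0], ![0,1,0,0], ![0,0,1,0],
      ![0,0,0,1], ![0,1,0,1], ![0,1,1,0], ![0,0,0,2]} : Set (Fin 4 → ℝ))

/-!
`Δ` is the pyramid with apex `(1,0,0,0)` over its facet `B` in `x₀ = 0`, so its volume is a quarter
of that of `B`. In the remaining coordinates `B` is the region under the graph of
`(b, c) ↦ 2 - c - max b c` over the unit square: its slices at constant `b` have area `1 - b² / 2`,
hence `B` has volume `5 / 6`.
-/

open Set Matrix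
open scoped Pointwise

lemma convexHull_range_eq_image_stdSimplex {R ι E : Type*} [Field R] [LinearOrder R]
    [IsStrictOrderedRing R] [Fintype ι] [AddCommGroup E] [Module R E] (v : ι → E) :
    convexHull R (range v) = Fintype.linearCombination R v '' stdSimplex R ι := by
  classical
  rw [← convexHull_rangle_single_eq_stdSimplex, LinearMap.image_convexHull, ← range_comp]
  simp [Function.comp_def]

lemma integral_max_const_left {a b c : ℝ} (hab : a ≤ b) (hbc : b ≤ c) :
    ∫ x in a..c, max b x = b * (b - a) + (c ^ 2 - b ^ 2) / 2 := by
  have hcont : Continuous fun x : ℝ ↦ max b x := by fun_prop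
  have hleft : ∫ x in a..b, max b x = ∫ _ in a..b, b :=
    intervalIntegral.integral_congr fun x hx ↦ max_eq_left (uIcc_of_le hab ▸ hx).2
  have hright : ∫ x in b..c, max b x = ∫ x in b..c, x :=
    intervalIntegral.integral_congr fun x hx ↦ max_eq_right (uIcc_of_le hbc ▸ hx).1
  rw [← intervalIntegral.integral_add_adjacent_intervals (hcont.intervalIntegrable a b)
    (hcont.intervalIntegrable b c), hleft, hright, intervalIntegral.integral_const, integral_id,
    smul_eq_mul, mul_comm]

lemma integral_one_sub_div_pow {h : ℝ} (hh : h ≠ 0) (n : ℕ) :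
    ∫ t in 0..h, (1 - t / h) ^ n = h / (n + 1) := by
  rw [intervalIntegral.integral_comp_sub_div (fun x ↦ x ^ n) hh]
  simp [integral_pow, hh, div_eq_mul_inv]

section Slices

lemma measure_prod_apply₀ {α β : Type*} [MeasurableSpace α] [MeasurableSpace β]
    {μ : Measure α} {ν : Measure β} [SFinite ν] {s : Set (α × β)}
    (hs : NullMeasurableSet s (μ.prod ν)) :
    μ.prod ν s = ∫⁻ x, ν (Prod.mk x ⁻¹' s) ∂μ := by
  rw [← measure_toMeasurable s, Measure.prod_apply (measurableSet_toMeasurable _ s)]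
  refine lintegral_congr_ae ?_
  filter_upwards [Measure.ae_ae_of_ae_prod hs.toMeasurable_ae_eq] with x hx
  exact measure_congr hx

variable {n : ℕ} {S : Set (Fin (n + 1) → ℝ)}

lemma volume_eq_lintegral_slice (hS : NullMeasurableSet S) :
    volume S = ∫⁻ t : ℝ, volume {y : Fin n → ℝ | vecCons t y ∈ S} := by
  have hsplit := (volume_preserving_piFinSuccAbove (fun _ : Fin (n + 1) ↦ ℝ) 0).symm
  rw [← hsplit.measure_preimage hS, Measure.volume_eq_prod,
    measure_prod_apply₀ (hS.preimage hsplit.quasiMeasurePreserving)]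
  simp only [preimage_preimage, MeasurableEquiv.piFinSuccAbove_symm_apply,
    Fin.insertNthEquiv_zero]
  rfl

lemma volume_eq_setLIntegral_slice (hS : NullMeasurableSet S) {I : Set ℝ} (hI : MeasurableSet I)
    (hSI : ∀ x ∈ S, x 0 ∈ I) :
    volume S = ∫⁻ t in I, volume {y : Fin n → ℝ | vecCons t y ∈ S} := by
  rw [volume_eq_lintegral_slice hS, ← lintegral_indicator hI]
  refine lintegral_congr fun t ↦ ?_
  by_cases ht : t ∈ I
  · rw [indicator_of_mem ht]
  · have hempty : {y : Fin n → ℝ | vecCons t y ∈ S} = ∅ :=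
      eq_empty_of_forall_notMem fun y hy ↦ ht (hSI _ hy)
    rw [indicator_of_notMem ht, hempty, measure_empty]

lemma setLIntegral_Icc_ofReal {a b : ℝ} (hab : a ≤ b) {f : ℝ → ℝ}
    (hf : IntervalIntegrable f volume a b) (hf₀ : ∀ t ∈ Icc a b, 0 ≤ f t) :
    ∫⁻ t in Icc a b, ENNReal.ofReal (f t) = ENNReal.ofReal (∫ t in a..b, f t) := by
  rw [intervalIntegral.integral_of_le hab, ← integral_Icc_eq_integral_Ioc,
    ofReal_integral_eq_lintegral_ofReal]
  · exact (intervalIntegrable_iff_integrableOn_Icc_of_le hab).1 hf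
  · exact (ae_restrict_iff' measurableSet_Icc).2 (.of_forall hf₀)

lemma volume_eq_ofReal_integral_slice (hS : NullMeasurableSet S) {a b : ℝ} (hab : a ≤ b)
    (hSab : ∀ x ∈ S, x 0 ∈ Icc a b) {A : ℝ → ℝ} (hA : IntervalIntegrable A volume a b)
    (hA₀ : ∀ t ∈ Icc a b, 0 ≤ A t)
    (hslice : ∀ t ∈ Icc a b, volume {y : Fin n → ℝ | vecCons t y ∈ S} = ENNReal.ofReal (A t)) :
    volume S = ENNReal.ofReal (∫ t in a..b, A t) := by
  rw [volume_eq_setLIntegral_slice hS measurableSet_Icc hSab,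
    setLIntegral_congr_fun measurableSet_Icc hslice, setLIntegral_Icc_ofReal hab hA hA₀]

lemma volume_subgraph {a b : ℝ} (hab : a ≤ b) {f : ℝ → ℝ} (hfm : Measurable f)
    (hf : IntervalIntegrable f volume a b) (hf₀ : ∀ t ∈ Icc a b, 0 ≤ f t) :
    volume {z : Fin 2 → ℝ | z 0 ∈ Icc a b ∧ z 1 ∈ Icc 0 (f (z 0))} =
      ENNReal.ofReal (∫ t in a..b, f t) := by
  refine volume_eq_ofReal_integral_slice ?_ hab (fun z hz ↦ hz.1) hf hf₀ fun t ht ↦ ?_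
  · apply MeasurableSet.nullMeasurableSet
    measurability
  · have hsegment : {y : Fin 1 → ℝ | t ∈ Icc a b ∧ y 0 ∈ Icc 0 (f t)} = Icc 0 fun _ ↦ f t := by
      ext y
      simp [ht.1, ht.2, Pi.le_def]
    change volume {y : Fin 1 → ℝ | t ∈ Icc a b ∧ y 0 ∈ Icc 0 (f t)} = ENNReal.ofReal (f t)
    rw [hsegment, Real.volume_Icc_pi]
    simp

end Slices

section Pyramid

variable {n : ℕ} {T : Set (Fin n → ℝ)} {h t : ℝ} {p : Fin n → ℝ}

lemma convexHull_image_vecCons_zero (T : Set (Fin n → ℝ)) :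
    convexHull ℝ (vecCons 0 '' T) = vecCons (0 : ℝ) '' convexHull ℝ T :=
  (IsLinearMap.image_convexHull ⟨by simp, by simp⟩ T).symm

/-- The pyramid in `ℝⁿ⁺¹` over the convex hull of `T ⊆ ℝⁿ`, placed at height zero in the first
coordinate, with apex `(h, p)`. -/
def pyramid (T : Set (Fin n → ℝ)) (h : ℝ) (p : Fin n → ℝ) : Set (Fin (n + 1) → ℝ) :=
  convexHull ℝ (insert (vecCons h p) (vecCons 0 '' T))

lemma mem_pyramid (hT : T.Nonempty) {x : Fin (n + 1) → ℝ} :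
    x ∈ pyramid T h p ↔ ∃ s ∈ Icc (0 : ℝ) 1, ∃ y ∈ convexHull ℝ T,
      vecCons (s * h) (s • p + (1 - s) • y) = x := by
  simp_rw [pyramid, convexHull_insert (hT.image _), convexHull_image_vecCons_zero,
    convexJoin_singleton_left, mem_iUnion₂, exists_prop, exists_mem_image,
    segment_symm ℝ (vecCons h p), segment_eq_image, mem_image]
  have hcomb (s : ℝ) (y : Fin n → ℝ) :
      (1 - s) • vecCons 0 y + s • vecCons h p = vecCons (s * h) (s • p + (1 - s) • y) := by
    simp [add_comm]
  simp_rw [hcomb]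
  exact ⟨fun ⟨y, hy, s, hs, hx⟩ ↦ ⟨s, hs, y, hy, hx⟩, fun ⟨s, hs, y, hy, hx⟩ ↦ ⟨y, hy, s, hs, hx⟩⟩

lemma apply_zero_mem_Icc_of_mem_pyramid (hT : T.Nonempty) (hh : 0 ≤ h) {x : Fin (n + 1) → ℝ}
    (hx : x ∈ pyramid T h p) : x 0 ∈ Icc 0 h := by
  obtain ⟨s, hs, y, -, rfl⟩ := (mem_pyramid hT).1 hx
  exact ⟨mul_nonneg hs.1 hh, mul_le_of_le_one_left hh hs.2⟩

lemma slice_pyramid (hT : T.Nonempty) (hh : 0 < h) (ht : t ∈ Icc 0 h) :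
    {y | vecCons t y ∈ pyramid T h p} =
      (t / h) • p +ᵥ (1 - t / h) • convexHull ℝ T := by
  ext y
  simp only [mem_ofPred_eq, mem_pyramid hT, mem_vadd_set, mem_smul_set, vecCons_inj,
    vadd_eq_add, exists_exists_and_eq_and]
  constructor
  · rintro ⟨s, -, z, hz, rfl, rfl⟩
    exact ⟨z, hz, by rw [mul_div_cancel_right₀ s hh.ne']⟩
  · rintro ⟨z, hz, rfl⟩
    exact ⟨t / h, ⟨div_nonneg ht.1 hh.le, div_le_one_of_le₀ ht.2 hh.le⟩, z, hz,
      div_mul_cancel₀ t hh.ne', rfl⟩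

lemma volume_pyramid (T : Set (Fin n → ℝ)) (hh : 0 < h) (p : Fin n → ℝ) :
    volume (pyramid T h p) = ENNReal.ofReal (h / (n + 1)) * volume (convexHull ℝ T) := by
  obtain rfl | hT := T.eq_empty_or_nonempty
  · simp [pyramid]
  have hratio {t : ℝ} (ht : t ∈ Icc 0 h) : 0 ≤ (1 - t / h) ^ n :=
    pow_nonneg (sub_nonneg.2 (div_le_one_of_le₀ ht.2 hh.le)) n
  have hslice : EqOn (fun t ↦ volume {y | vecCons t y ∈ pyramid T h p})
      (fun t ↦ ENNReal.ofReal ((1 - t / h) ^ n) * volume (convexHull ℝ T)) (Icc 0 h) := by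
    intro t ht
    simp only [slice_pyramid hT hh ht, measure_vadd, Measure.addHaar_smul,
      Module.finrank_fin_fun, abs_of_nonneg (hratio ht)]
  have hcont : Continuous fun t : ℝ ↦ (1 - t / h) ^ n := by fun_prop
  have hmeas : NullMeasurableSet (pyramid T h p) := (convex_convexHull ℝ _).nullMeasurableSet volume
  rw [volume_eq_setLIntegral_slice hmeas measurableSet_Icc
      fun x ↦ apply_zero_mem_Icc_of_mem_pyramid hT hh.le,
    setLIntegral_congr_fun measurableSet_Icc hslice,
    lintegral_mul_const _ hcont.measurable.ennreal_ofReal,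
    setLIntegral_Icc_ofReal hh.le (hcont.intervalIntegrable 0 h) fun _ ↦ hratio,
    integral_one_sub_div_pow hh.ne']

end Pyramid

section Base

/-- The points with vanishing first coordinate among those spanning `DeltaM4`, in the remaining
three coordinates. -/
def basePoints : Fin 7 → Fin 3 → ℝ :=
  ![![0, 0, 0], ![1, 0, 0], ![0, 1, 0], ![0, 0, 1], ![1, 0, 1], ![1, 1, 0], ![0, 0, 2]]

lemma DeltaM4_eq_pyramid : DeltaM4 = pyramid (range basePoints) 1 ![0, 0, 0] := by
  have hbase : vecCons 0 '' range basePoints = {![0, 0, 0, 0], ![0, 1, 0, 0], ![0, 0, 1, 0],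
      ![0, 0, 0, 1], ![0, 1, 0, 1], ![0, 1, 1, 0], ![0, 0, 0, 2]} := by
    simp only [basePoints, range_cons, range_empty, union_empty, singleton_union, image_insert_eq,
      image_singleton]
  rw [DeltaM4, pyramid, hbase, insert_comm]

/-- The facet of `DeltaM4` on which the first coordinate vanishes, as the region under a graph
over the unit square. The upper bound on `y 2` combines the two facet inequalities
`y 0 + y 1 + y 2 ≤ 2` and `2 * y 1 + y 2 ≤ 2`. -/
def baseRegion : Set (Fin 3 → ℝ) :=
  {y | y 0 ∈ Icc 0 1 ∧ y 1 ∈ Icc 0 1 ∧ y 2 ∈ Icc 0 (2 - y 1 - max (y 0) (y 1))}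

lemma mem_convexHull_basePoints {y : Fin 3 → ℝ} :
    y ∈ convexHull ℝ (range basePoints) ↔ ∃ w₀ w₁ w₂ w₃ w₄ w₅ w₆ : ℝ,
      (0 ≤ w₀ ∧ 0 ≤ w₁ ∧ 0 ≤ w₂ ∧ 0 ≤ w₃ ∧ 0 ≤ w₄ ∧ 0 ≤ w₅ ∧ 0 ≤ w₆) ∧
      w₀ + w₁ + w₂ + w₃ + w₄ + w₅ + w₆ = 1 ∧
      w₁ + w₄ + w₅ = y 0 ∧ w₂ + w₅ = y 1 ∧ w₃ + w₄ + w₆ * 2 = y 2 := by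
  rw [convexHull_range_eq_image_stdSimplex]
  simp [stdSimplex, funext_iff, Fin.forall_fin_succ, Fin.exists_fin_succ_pi, basePoints,
    Fintype.linearCombination_apply, Fin.sum_univ_succ, add_assoc, and_assoc]

lemma convexHull_basePoints_subset_baseRegion :
    convexHull ℝ (range basePoints) ⊆ baseRegion := by
  intro y hy
  obtain ⟨w₀, w₁, w₂, w₃, w₄, w₅, w₆, hw, hsum, hy₀, hy₁, hy₂⟩ := mem_convexHull_basePoints.1 hy
  have hmax : max (y 0) (y 1) ≤ 2 - y 1 - y 2 := max_le (by linarith) (by linarith)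
  exact ⟨⟨by linarith, by linarith⟩, ⟨by linarith, by linarith⟩, by linarith, by linarith⟩

lemma baseRegion_subset_convexHull_basePoints :
    baseRegion ⊆ convexHull ℝ (range basePoints) := by
  rintro y ⟨⟨h₀, h₀'⟩, ⟨h₁, -⟩, h₂, h₂'⟩
  obtain ⟨hsum, hsum'⟩ := max_le_iff.1 (le_sub_comm.1 h₂')
  rw [mem_convexHull_basePoints]
  -- Barycentric weights on each of the three polytopes into which the planes `y 0 = y 1` and
  -- `y 2 = y 0 - y 1` cut the region.
  obtain h | h := le_total (y 0) (y 1)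
  · exact ⟨1 - y 1 - y 2 / 2, 0, y 1 - y 0, 0, 0, y 0, y 2 / 2, by grind⟩
  obtain h' | h' := le_total (y 2) (y 0 - y 1)
  · exact ⟨1 - y 0, y 0 - y 1 - y 2, 0, 0, y 2, y 1, 0, by grind⟩
  · exact ⟨1 - (y 0 + y 1 + y 2) / 2, 0, 0, 0, y 0 - y 1, y 1, (y 2 - (y 0 - y 1)) / 2, by grind⟩

lemma convexHull_basePoints : convexHull ℝ (range basePoints) = baseRegion :=
  convexHull_basePoints_subset_baseRegion.antisymm baseRegion_subset_convexHull_basePoints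

lemma integral_baseRegion_height {b : ℝ} (hb : b ∈ Icc 0 1) :
    ∫ c in 0..1, (2 - c - max b c) = 1 - b ^ 2 / 2 := by
  rw [intervalIntegral.integral_sub ((by fun_prop : Continuous _).intervalIntegrable 0 1)
      ((by fun_prop : Continuous _).intervalIntegrable 0 1),
    intervalIntegral.integral_sub (by simp) (by simp), integral_max_const_left hb.1 hb.2]
  norm_num
  ring

lemma volume_slice_baseRegion {b : ℝ} (hb : b ∈ Icc 0 1) :
    volume {z : Fin 2 → ℝ | vecCons b z ∈ baseRegion} = ENNReal.ofReal (1 - b ^ 2 / 2) := by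
  have hslice : {z : Fin 2 → ℝ | vecCons b z ∈ baseRegion} =
      {z | z 0 ∈ Icc 0 1 ∧ z 1 ∈ Icc 0 (2 - z 0 - max b (z 0))} := by
    ext z
    exact and_iff_right hb
  rw [hslice, ← integral_baseRegion_height hb]
  refine volume_subgraph (f := fun c ↦ 2 - c - max b c) zero_le_one ?_ ?_ fun c hc ↦ ?_
  · fun_prop
  · exact (by fun_prop : Continuous _).intervalIntegrable 0 1
  · have hmax : max b c ≤ 1 := max_le hb.2 hc.2
    linarith [hc.2]

lemma volume_baseRegion : volume baseRegion = ENNReal.ofReal (5 / 6) := by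
  have hint : ∫ b in (0 : ℝ)..1, (1 - b ^ 2 / 2) = 5 / 6 := by
    norm_num [integral_pow]
  rw [← hint]
  refine volume_eq_ofReal_integral_slice ?_ zero_le_one (fun y hy ↦ hy.1) ?_ ?_
    fun b ↦ volume_slice_baseRegion
  · rw [← convexHull_basePoints]
    exact (convex_convexHull ℝ _).nullMeasurableSet volume
  · exact (by fun_prop : Continuous _).intervalIntegrable 0 1
  · intro b hb
    nlinarith [hb.1, hb.2]

end Base

theorem volume_DeltaM4 : volume DeltaM4 = ENNReal.ofReal (5 / 24) := by
  rw [DeltaM4_eq_pyramid, volume_pyramid _ one_pos, convexHull_basePoints, volume_baseRegion,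
    ← ENNReal.ofReal_mul (by positivity)]
  norm_num
end

section
/- The integral of the linear function (w,x,y,z) ↦ 2w + x + 4y + 3z over the convex hull Δ in ℝ⁴ of the eight points (0,0,0,0), (1,0,0,0), (0,1,0,0), (0,0,1,0), (0,0,0,1), (0,1,0,1), (0,1,1,0), (0,0,0,2), with respect to 4-dimensional Lebesgue measure, equals 2/3. -/
open MeasureTheory

/-!
In the coordinates `(w, x, y, z)` of `ℝ⁴`, the hyperplanes `x = y` and `x = y + z` cut `DeltaM4`
into three simplices, each with a vertex at the origin. The integral of a linear function over a
simplex is the volume times the mean of its values at the vertices, and the volume is `|det| / n!`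
for the matrix of the nonzero vertices. For the simplex spanned by the origin and the standard basis
this follows by slicing perpendicular to a coordinate axis: the slices are scaled copies of the same
simplex in one dimension less. The three simplices contribute `2 * 17`, `2 * 17` and `1 * 12`, in
units of `1 / 5!`.
-/

open Set
open scoped Function Nat Pointwise

/-- The full-dimensional simplex in `ℝ^ι` spanned by the origin and the standard basis vectors. It
is the model for all simplices with a vertex at the origin, and differs from `stdSimplex ℝ ι`, which
lies in the hyperplane `∑ i, u i = 1`. -/
def cornerSimplex (ι : Type*) [Fintype ι] : Set (ι → ℝ) :=
  {u | 0 ≤ u ∧ ∑ i, u i ≤ 1}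

section CornerSimplex

variable {ι : Type*} [Fintype ι]

lemma convex_cornerSimplex : Convex ℝ (cornerSimplex ι) :=
  (convex_Ici 0).inter <|
    convex_halfSpace_le (f := fun u : ι → ℝ => ∑ i, u i)
      ⟨fun u v => by simp [Finset.sum_add_distrib], fun c u => by simp [Finset.mul_sum]⟩ 1

lemma convexHull_insert_zero_range {E : Type*} [AddCommGroup E] [Module ℝ E] (v : ι → E) :
    convexHull ℝ (insert 0 (range v)) = Fintype.linearCombination ℝ v '' cornerSimplex ι := by
  classical
  refine Subset.antisymm (convexHull_min ?_ (convex_cornerSimplex.linear_image _)) ?_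
  · refine insert_subset ⟨0, ⟨le_rfl, by simp⟩, map_zero _⟩ (range_subset_iff.2 fun i => ?_)
    exact ⟨Pi.single i 1, ⟨Pi.single_nonneg.2 zero_le_one, by simp⟩, by simp⟩
  · rintro _ ⟨u, ⟨hu_nonneg, hu_sum⟩, rfl⟩
    refine mem_convexHull_of_exists_fintype
      (fun o : Option ι => o.elim (1 - ∑ i, u i) u) (fun o => o.elim 0 v) ?_ ?_ ?_ ?_
    · rintro (_ | i)
      · exact sub_nonneg.2 hu_sum
      · exact hu_nonneg i
    · simp
    · rintro (_ | i)
      · exact mem_insert _ _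
      · exact mem_insert_of_mem _ (mem_range_self i)
    · simp [Fintype.linearCombination_apply]

lemma convexHull_insert_zero_range_single [DecidableEq ι] :
    convexHull ℝ (insert 0 (range fun i : ι => Pi.single i (1 : ℝ))) = cornerSimplex ι := by
  rw [convexHull_insert_zero_range]
  convert! image_id (cornerSimplex ι)
  ext u i
  simp [Fintype.linearCombination_apply, Pi.single_apply]

lemma isCompact_cornerSimplex : IsCompact (cornerSimplex ι) := by
  classical
  rw [← convexHull_insert_zero_range_single]
  exact ((finite_range _).insert 0).isCompact_convexHull ℝ

lemma smul_cornerSimplex {r : ℝ} (hr : 0 ≤ r) :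
    r • cornerSimplex ι = {u | 0 ≤ u ∧ ∑ i, u i ≤ r} := by
  ext u
  rcases hr.eq_or_lt with rfl | hr
  · have zero_mem : (0 : ι → ℝ) ∈ cornerSimplex ι := ⟨le_rfl, by simp⟩
    rw [zero_smul_set ⟨0, zero_mem⟩]
    constructor
    · rintro rfl
      exact ⟨le_rfl, by simp⟩
    · rintro ⟨hu_nonneg, hu_sum⟩
      have hu_sum_eq := hu_sum.antisymm (Finset.sum_nonneg fun i _ => hu_nonneg i)
      exact (Fintype.sum_eq_zero_iff_of_nonneg hu_nonneg).1 hu_sum_eq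
  · have smul_nonneg_iff : 0 ≤ r⁻¹ • u ↔ 0 ≤ u := smul_nonneg_iff_nonneg_of_pos_left (inv_pos.2 hr)
    simp only [mem_smul_set_iff_inv_smul_mem₀ hr.ne', cornerSimplex, mem_ofPred_eq, Pi.smul_apply,
      smul_eq_mul, ← Finset.mul_sum, inv_mul_le_one₀ hr, smul_nonneg_iff]

lemma insertNth_mem_cornerSimplex_iff {n : ℕ} {i : Fin (n + 1)} {t : ℝ} {u : Fin n → ℝ} :
    i.insertNth t u ∈ cornerSimplex (Fin (n + 1)) ↔
      t ∈ Icc 0 1 ∧ u ∈ (1 - t) • cornerSimplex (Fin n) := by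
  have insertNth_nonneg : 0 ≤ i.insertNth (α := fun _ => ℝ) t u ↔ 0 ≤ t ∧ 0 ≤ u := by
    simp [Pi.le_def, Fin.forall_iff_succAbove i]
  have mem_iff : i.insertNth t u ∈ cornerSimplex (Fin (n + 1)) ↔
      0 ≤ t ∧ 0 ≤ u ∧ t + ∑ j, u j ≤ 1 := by
    simp [cornerSimplex, insertNth_nonneg, Fin.sum_univ_succAbove _ i, and_assoc]
  rw [mem_iff]
  constructor
  · rintro ⟨ht, hu, hsum⟩
    have ht_le : t ≤ 1 := by linarith [Finset.sum_nonneg fun j (_ : j ∈ Finset.univ) => hu j]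
    rw [smul_cornerSimplex (sub_nonneg.2 ht_le)]
    exact ⟨⟨ht, ht_le⟩, hu, le_sub_iff_add_le'.2 hsum⟩
  · rintro ⟨⟨ht, ht_le⟩, hu⟩
    rw [smul_cornerSimplex (sub_nonneg.2 ht_le)] at hu
    exact ⟨ht, hu.1, le_sub_iff_add_le'.1 hu.2⟩

end CornerSimplex

lemma integral_eq_integral_integral_insertNth {n : ℕ} (i : Fin (n + 1)) {E : Type*}
    [NormedAddCommGroup E] [NormedSpace ℝ E] {f : (Fin (n + 1) → ℝ) → E} (hf : Integrable f) :
    ∫ p, f p = ∫ t : ℝ, ∫ u : Fin n → ℝ, f (i.insertNth t u) := by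
  let e := (MeasurableEquiv.piFinSuccAbove (fun _ : Fin (n + 1) => ℝ) i).symm
  have he : MeasurePreserving e :=
    (volume_preserving_piFinSuccAbove (fun _ : Fin (n + 1) => ℝ) i).symm _
  rw [← he.integral_comp', Measure.volume_eq_prod]
  exact integral_prod _ ((he.integrable_comp_emb e.measurableEmbedding).2 hf)

lemma volume_real_smul_cornerSimplex {n : ℕ} {r : ℝ} (hr : 0 ≤ r) :
    volume.real (r • cornerSimplex (Fin n)) = r ^ n * volume.real (cornerSimplex (Fin n)) := by
  simp [measureReal_def, Measure.addHaar_smul, abs_of_nonneg, hr]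

lemma integral_indicator_cornerSimplex_insertNth {n : ℕ} (i : Fin (n + 1)) (g : ℝ → ℝ) (t : ℝ) :
    ∫ u : Fin n → ℝ,
        (cornerSimplex (Fin (n + 1))).indicator (fun p => g (p i)) (i.insertNth t u) =
      (Icc 0 1).indicator
        (fun t => volume.real (cornerSimplex (Fin n)) * ((1 - t) ^ n * g t)) t := by
  classical
  by_cases ht : t ∈ Icc (0 : ℝ) 1
  · have slice_eq : (fun u : Fin n → ℝ =>
          (cornerSimplex (Fin (n + 1))).indicator (fun p => g (p i)) (i.insertNth t u)) =
        ((1 - t) • cornerSimplex (Fin n)).indicator fun _ => g t := by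
      ext u
      simp [indicator_apply, insertNth_mem_cornerSimplex_iff, ht.1, ht.2]
    rw [slice_eq, integral_indicator_const _ (isCompact_cornerSimplex.smul _).measurableSet,
      volume_real_smul_cornerSimplex (sub_nonneg.2 ht.2), indicator_of_mem ht, smul_eq_mul]
    ring
  · simp [insertNth_mem_cornerSimplex_iff, ht]

lemma setIntegral_cornerSimplex_comp_apply {n : ℕ} (i : Fin (n + 1)) {g : ℝ → ℝ}
    (hg : Continuous g) :
    ∫ u in cornerSimplex (Fin (n + 1)), g (u i) =
      volume.real (cornerSimplex (Fin n)) * ∫ t in (0 : ℝ)..1, (1 - t) ^ n * g t := by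
  have integrableOn_comp : IntegrableOn (fun u => g (u i)) (cornerSimplex (Fin (n + 1))) :=
    (hg.comp (continuous_apply i)).continuousOn.integrableOn_compact isCompact_cornerSimplex
  have measurableSet_cornerSimplex := (isCompact_cornerSimplex (ι := Fin (n + 1))).measurableSet
  rw [← integral_indicator measurableSet_cornerSimplex, integral_eq_integral_integral_insertNth i
    ((integrable_indicator_iff measurableSet_cornerSimplex).2 integrableOn_comp)]
  simp_rw [integral_indicator_cornerSimplex_insertNth]
  rw [integral_indicator measurableSet_Icc, integral_Icc_eq_integral_Ioc,
    ← intervalIntegral.integral_of_le zero_le_one, intervalIntegral.integral_const_mul]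

lemma volume_real_cornerSimplex (n : ℕ) : volume.real (cornerSimplex (Fin n)) = 1 / n ! := by
  induction n with
  | zero =>
    have eq_univ : cornerSimplex (Fin 0) = univ := by
      ext u
      simp [cornerSimplex, Subsingleton.elim u 0]
    simp [eq_univ, measureReal_def, volume_pi]
  | succ n ih =>
    have integral_slices : ∫ t in (0 : ℝ)..1, (1 - t) ^ n = 1 / (n + 1) := by
      rw [intervalIntegral.integral_comp_sub_left (fun t => t ^ n)]
      simp
    have volume_eq := setIntegral_cornerSimplex_comp_apply (n := n) 0 (g := fun _ => 1)
      continuous_const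
    simp only [setIntegral_const, smul_eq_mul, mul_one, ih, integral_slices] at volume_eq
    rw [volume_eq, Nat.factorial_succ]
    push_cast
    field_simp

lemma setIntegral_cornerSimplex_apply {n : ℕ} (i : Fin n) :
    ∫ u in cornerSimplex (Fin n), u i = 1 / (n + 1)! := by
  obtain _ | n := n
  · exact i.elim0
  have integral_slices : ∫ t in (0 : ℝ)..1, (1 - t) ^ n * t = 1 / ((n + 1) * (n + 2)) :=
    calc ∫ t in (0 : ℝ)..1, (1 - t) ^ n * t
        = ∫ t in (0 : ℝ)..1, t ^ n * (1 - t) := by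
          simpa using intervalIntegral.integral_comp_sub_left
            (a := 0) (b := 1) (fun t : ℝ => t ^ n * (1 - t)) 1
      _ = ∫ t in (0 : ℝ)..1, (t ^ n - t ^ (n + 1)) := by simp only [mul_sub, mul_one, pow_succ]
      _ = 1 / ((n + 1) * (n + 2)) := by
          rw [intervalIntegral.integral_sub (by simp) (by simp), integral_pow, integral_pow]
          push_cast
          field_simp
          ring
  rw [setIntegral_cornerSimplex_comp_apply i continuous_id', integral_slices,
    volume_real_cornerSimplex, Nat.factorial_succ, Nat.factorial_succ]
  push_cast
  field_simp
  ring

lemma setIntegral_cornerSimplex_linearMap {n : ℕ} (ℓ : (Fin n → ℝ) →ₗ[ℝ] ℝ) :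
    ∫ u in cornerSimplex (Fin n), ℓ u = (∑ i, ℓ (Pi.single i 1)) / (n + 1)! := by
  have apply_eq_sum (u : Fin n → ℝ) : ℓ u = ∑ i, u i * ℓ (Pi.single i 1) := by
    conv_lhs => rw [pi_eq_sum_univ' u]
    simp
  have integrableOn_apply (i : Fin n) :
      IntegrableOn (fun u => u i * ℓ (Pi.single i 1)) (cornerSimplex (Fin n)) :=
    Continuous.continuousOn (by fun_prop) |>.integrableOn_compact isCompact_cornerSimplex
  calc ∫ u in cornerSimplex (Fin n), ℓ u
      = ∑ i, ∫ u in cornerSimplex (Fin n), u i * ℓ (Pi.single i 1) := by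
        rw [← integral_finsetSum _ fun i _ => integrableOn_apply i]
        simp_rw [← apply_eq_sum]
    _ = (∑ i, ℓ (Pi.single i 1)) / (n + 1)! := by
        simp_rw [integral_mul_const, setIntegral_cornerSimplex_apply, one_div_mul_eq_div,
          Finset.sum_div]

lemma setIntegral_image_linearMap {E F : Type*} [NormedAddCommGroup E] [NormedSpace ℝ E]
    [FiniteDimensional ℝ E] [MeasurableSpace E] [BorelSpace E] [NormedAddCommGroup F]
    [NormedSpace ℝ F] (μ : Measure E) [μ.IsAddHaarMeasure] (f : E →ₗ[ℝ] E) {s : Set E}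
    (hs : MeasurableSet s) (g : E → F) :
    ∫ x in f '' s, g x ∂μ = |LinearMap.det f| • ∫ x in s, g (f x) ∂μ := by
  by_cases hf : LinearMap.det f = 0
  · rw [setIntegral_measure_zero g (by simp [hf]), hf, abs_zero, zero_smul]
  · rw [← integral_smul]
    exact integral_image_eq_integral_abs_det_fderiv_smul μ hs
      (f' := fun _ => f.toContinuousLinearMap)
      (fun x _ => f.toContinuousLinearMap.hasFDerivWithinAt)
      (f.equivOfDetNeZero hf).injective.injOn g

theorem setIntegral_convexHull_insert_zero_range {n : ℕ} (v : Fin n → Fin n → ℝ)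
    (ℓ : (Fin n → ℝ) →ₗ[ℝ] ℝ) :
    ∫ p in convexHull ℝ (insert 0 (range v)), ℓ p =
      |(Matrix.of v).det| * (∑ i, ℓ (v i)) / (n + 1)! := by
  have linearCombination_eq :
      Fintype.linearCombination ℝ v = Matrix.toLin' (Matrix.of v).transpose := by
    ext i j
    simp
  have det_eq : LinearMap.det (Fintype.linearCombination ℝ v) = (Matrix.of v).det := by
    rw [linearCombination_eq, LinearMap.det_toLin', Matrix.det_transpose]
  have setIntegral_comp : ∫ u in cornerSimplex (Fin n), ℓ (Fintype.linearCombination ℝ v u) =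
      (∑ i, ℓ (v i)) / (n + 1)! := by
    simpa using setIntegral_cornerSimplex_linearMap (ℓ ∘ₗ Fintype.linearCombination ℝ v)
  rw [convexHull_insert_zero_range,
    setIntegral_image_linearMap _ _ isCompact_cornerSimplex.measurableSet, det_eq,
    setIntegral_comp, smul_eq_mul, mul_div_assoc]

lemma aedisjoint_convexHull_of_separated {E : Type*} [NormedAddCommGroup E] [NormedSpace ℝ E]
    [FiniteDimensional ℝ E] [MeasurableSpace E] [BorelSpace E] (μ : Measure E)
    [μ.IsAddHaarMeasure] {s t : Set E} {ℓ : E →ₗ[ℝ] ℝ} (hℓ : ℓ ≠ 0) (hs : ∀ p ∈ s, ℓ p ≤ 0)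
    (ht : ∀ p ∈ t, 0 ≤ ℓ p) : AEDisjoint μ (convexHull ℝ s) (convexHull ℝ t) := by
  have convexHull_s_le : convexHull ℝ s ⊆ {p | ℓ p ≤ 0} :=
    convexHull_min hs (convex_halfSpace_le ℓ.isLinear 0)
  have le_convexHull_t : convexHull ℝ t ⊆ {p | 0 ≤ ℓ p} :=
    convexHull_min ht (convex_halfSpace_ge ℓ.isLinear 0)
  have inter_subset_ker : convexHull ℝ s ∩ convexHull ℝ t ⊆ (LinearMap.ker ℓ : Set E) :=
    fun p hp => (convexHull_s_le hp.1).antisymm (le_convexHull_t hp.2)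
  exact measure_mono_null inter_subset_ker
    (Measure.addHaar_submodule μ _ (LinearMap.ker_eq_top.not.2 hℓ))

namespace DeltaM4

/-- The nonzero vertices of the three simplices `cell k` that triangulate `DeltaM4`: the parts
`x ≤ y`, `y ≤ x ≤ y + z` and `y + z ≤ x`, in this order. -/
def cellVertex : Fin 3 → Fin 4 → Fin 4 → ℝ :=
  ![![![1, 0, 0, 0], ![0, 1, 1, 0], ![0, 0, 1, 0], ![0, 0, 0, 2]],
    ![![1, 0, 0, 0], ![0, 1, 1, 0], ![0, 1, 0, 1], ![0, 0, 0, 2]],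
    ![![1, 0, 0, 0], ![0, 1, 1, 0], ![0, 1, 0, 1], ![0, 1, 0, 0]]]

/-- The simplices of a triangulation of `DeltaM4` all of whose members contain the origin. -/
def cell (k : Fin 3) : Set (Fin 4 → ℝ) :=
  convexHull ℝ (insert 0 (range (cellVertex k)))

/-- The G-function `G_η(w,x,y,z) = 2w + x + 4y + 3z` as a linear form. -/
def Geta : (Fin 4 → ℝ) →ₗ[ℝ] ℝ :=
  (2 : ℝ) • .proj 0 + .proj 1 + (4 : ℝ) • .proj 2 + (3 : ℝ) • .proj 3

lemma isCompact_cell (k : Fin 3) : IsCompact (cell k) :=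
  ((finite_range _).insert 0).isCompact_convexHull ℝ

lemma cell_subset (k : Fin 3) : cell k ⊆ DeltaM4 := by
  refine convexHull_mono (insert_subset ?_ (range_subset_iff.2 fun j => ?_))
  · simp [← Matrix.zero_empty]
  · fin_cases k <;> fin_cases j <;> simp [cellVertex]

lemma subset_halfSpaces :
    DeltaM4 ⊆ {p | 0 ≤ p ∧ p 0 + p 1 ≤ 1 ∧ 2 * p 0 + 2 * p 2 + p 3 ≤ 2 ∧
      2 * p 0 + p 1 + p 2 + p 3 ≤ 2} := by
  let facet₁ : (Fin 4 → ℝ) →ₗ[ℝ] ℝ := .proj 0 + .proj 1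
  let facet₂ : (Fin 4 → ℝ) →ₗ[ℝ] ℝ := (2 : ℝ) • .proj 0 + (2 : ℝ) • .proj 2 + .proj 3
  let facet₃ : (Fin 4 → ℝ) →ₗ[ℝ] ℝ := (2 : ℝ) • .proj 0 + .proj 1 + .proj 2 + .proj 3
  refine convexHull_min ?_ <| (convex_Ici 0).inter <|
    (convex_halfSpace_le facet₁.isLinear 1).inter <|
    (convex_halfSpace_le facet₂.isLinear 2).inter <| convex_halfSpace_le facet₃.isLinear 2
  rintro p (rfl | rfl | rfl | rfl | rfl | rfl | rfl | rfl) <;>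
    simp [Pi.le_def, Fin.forall_fin_succ] <;> norm_num

lemma subset_iUnion_cell : DeltaM4 ⊆ ⋃ k, cell k := by
  intro p hp
  obtain ⟨hp_nonneg, h01, h023, h0123⟩ := subset_halfSpaces hp
  obtain ⟨h0, h1, h2, h3⟩ : 0 ≤ p 0 ∧ 0 ≤ p 1 ∧ 0 ≤ p 2 ∧ 0 ≤ p 3 :=
    ⟨hp_nonneg 0, hp_nonneg 1, hp_nonneg 2, hp_nonneg 3⟩
  simp_rw [mem_iUnion, cell, convexHull_insert_zero_range]
  rcases le_total (p 1) (p 2) with h12 | h21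
  · refine ⟨0, ![p 0, p 1, p 2 - p 1, p 3 / 2], ⟨?_, ?_⟩, ?_⟩
    · intro j; fin_cases j <;> simp <;> linarith
    · simp only [Fin.sum_univ_four, Matrix.cons_val]; linarith
    · ext j; fin_cases j <;> simp [Fintype.linearCombination_apply, Fin.sum_univ_four, cellVertex]
  rcases le_total (p 1) (p 2 + p 3) with h123 | h231
  · refine ⟨1, ![p 0, p 2, p 1 - p 2, (p 2 + p 3 - p 1) / 2], ⟨?_, ?_⟩, ?_⟩
    · intro j; fin_cases j <;> simp <;> linarith
    · simp only [Fin.sum_univ_four, Matrix.cons_val]; linarith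
    · ext j; fin_cases j <;> simp [Fintype.linearCombination_apply, Fin.sum_univ_four, cellVertex]
  · refine ⟨2, ![p 0, p 2, p 3, p 1 - p 2 - p 3], ⟨?_, ?_⟩, ?_⟩
    · intro j; fin_cases j <;> simp <;> linarith
    · simp only [Fin.sum_univ_four, Matrix.cons_val]; linarith
    · ext j; fin_cases j <;> simp [Fintype.linearCombination_apply, Fin.sum_univ_four, cellVertex]

lemma eq_iUnion_cell : DeltaM4 = ⋃ k, cell k :=
  subset_iUnion_cell.antisymm (iUnion_subset cell_subset)

lemma pairwise_aedisjoint_cell : Pairwise (AEDisjoint volume on cell) := by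
  let xSubY : (Fin 4 → ℝ) →ₗ[ℝ] ℝ := .proj 1 - .proj 2
  let xSubYSubZ : (Fin 4 → ℝ) →ₗ[ℝ] ℝ := .proj 1 - .proj 2 - .proj 3
  have xSubY_ne_zero : xSubY ≠ 0 := fun h => by
    simpa [xSubY] using DFunLike.congr_fun h ![0, 1, 0, 0]
  have xSubYSubZ_ne_zero : xSubYSubZ ≠ 0 := fun h => by
    simpa [xSubYSubZ] using DFunLike.congr_fun h ![0, 1, 0, 0]
  have cell_zero_one : AEDisjoint volume (cell 0) (cell 1) := by
    apply aedisjoint_convexHull_of_separated _ xSubY_ne_zero <;> simp [xSubY, cellVertex]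
  have cell_zero_two : AEDisjoint volume (cell 0) (cell 2) := by
    apply aedisjoint_convexHull_of_separated _ xSubY_ne_zero <;> simp [xSubY, cellVertex]
  have cell_one_two : AEDisjoint volume (cell 1) (cell 2) := by
    apply aedisjoint_convexHull_of_separated _ xSubYSubZ_ne_zero <;> simp [xSubYSubZ, cellVertex]
  intro k l hkl
  fin_cases k <;> fin_cases l <;>
    first | exact absurd rfl hkl | assumption | exact AEDisjoint.symm ‹_›

lemma abs_det_cellVertex (k : Fin 3) : |(Matrix.of (cellVertex k)).det| = ![2, 2, 1] k := by
  fin_cases k <;>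
    simp [cellVertex, Matrix.det_succ_row_zero, Fin.sum_univ_succ, Fin.succAbove]

lemma sum_Geta_cellVertex (k : Fin 3) : ∑ j, Geta (cellVertex k j) = ![17, 17, 12] k := by
  fin_cases k <;> simp [cellVertex, Geta, Fin.sum_univ_four] <;> norm_num

lemma setIntegral_Geta_cell (k : Fin 3) :
    ∫ p in cell k, Geta p = ![2, 2, 1] k * ![17, 17, 12] k / 5! := by
  rw [cell, setIntegral_convexHull_insert_zero_range, abs_det_cellVertex, sum_Geta_cellVertex]

end DeltaM4

open DeltaM4

/-- The integral over Δ of the G-function `G_η(w,x,y,z) = 2w + x + 4y + 3z` equals `2/3`. -/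
theorem integral_Geta_DeltaM4 :
    ∫ p in DeltaM4, (2 * p 0 + p 1 + 4 * p 2 + 3 * p 3) = 2 / 3 := by
  have integrableOn_Geta : IntegrableOn Geta (⋃ k, cell k) :=
    Geta.continuous_of_finiteDimensional.continuousOn.integrableOn_compact
      (isCompact_iUnion isCompact_cell)
  calc ∫ p in DeltaM4, (2 * p 0 + p 1 + 4 * p 2 + 3 * p 3)
      = ∫ p in ⋃ k, cell k, Geta p := by simp [eq_iUnion_cell, Geta]
    _ = ∑ k, ∫ p in cell k, Geta p := by
        rw [integral_iUnion_ae (fun k => (isCompact_cell k).measurableSet.nullMeasurableSet)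
          pairwise_aedisjoint_cell integrableOn_Geta, tsum_fintype]
    _ = 2 / 3 := by
        simp only [setIntegral_Geta_cell, Fin.sum_univ_three, Matrix.cons_val, Nat.factorial]
        norm_num
end

section
/- Let J' be the 5×5 complex matrix with rows and columns indexed by 0,…,4 having entry 1 at positions (1,3) and (2,4), entry −1 at positions (3,1) and (4,2), and 0 elsewhere. Then for any 5×5 complex matrix Q with trace 0, the following are equivalent: (i) there exists a complex number μ with Qᵀ·J' + J'·Q = μ·J'; (ii) there exist complex numbers λ, λ₁, λ₂, λ₃, λ₄, a, b, c, d, f, g, h, p, q, r such that Q equals the matrix whose rows (indexed 0,…,4) are (−2λ, λ₁, λ₂, λ₃, λ₄), (0, a, b, f, g), (0, c, d, g, h), (0, p, q, λ−a, −c), (0, q, r, −b, λ−d). -/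
open Matrix

/-- Skew-symmetric matrix `J'` of the 2-form `2(e₁₃* + e₂₄*)`. -/
def Jmat' : Matrix (Fin 5) (Fin 5) ℂ :=
  !![0, 0, 0, 0, 0;
     0, 0, 0, 1, 0;
     0, 0, 0, 0, 1;
     0, -1, 0, 0, 0;
     0, 0, -1, 0, 0]

/-!
The form `Jmat'` has a one-dimensional radical spanned by `e₀` and is symplectic on
the other four coordinates. An infinitesimal similitude must preserve the radical, which kills the
lower left block, and must act on the quotient by an infinitesimal symplectic similitude, which in
Lagrangian blocks is `[P, S; T, μ - Pᵀ]` with `S` and `T` symmetric. The latter has trace `2μ`, so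
tracelessness forces the remaining diagonal entry to be `-2μ`.
-/

theorem trace_fromBlocks {m n R : Type*} [Fintype m] [Fintype n] [AddCommMonoid R]
    (A : Matrix m m R) (B : Matrix m n R) (C : Matrix n m R) (D : Matrix n n R) :
    (fromBlocks A B C D).trace = A.trace + D.trace := by
  simp [trace]

/-- `Q` is an infinitesimal similitude, with multiplier `μ`, of the bilinear form whose Gram matrix
is `K`: the derivative at the identity of `gᵀ * K * g = c • K`. -/
def IsInfinitesimalSimilitude {n R : Type*} [Fintype n] [CommRing R]
    (K : Matrix n n R) (μ : R) (Q : Matrix n n R) : Prop :=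
  Qᵀ * K + K * Q = μ • K

namespace IsInfinitesimalSimilitude

variable {l m n R : Type*} [Fintype l] [Fintype m] [Fintype n] [CommRing R]

theorem neg_form_iff {K Q : Matrix n n R} {μ : R} :
    IsInfinitesimalSimilitude (-K) μ Q ↔ IsInfinitesimalSimilitude K μ Q := by
  simp only [IsInfinitesimalSimilitude, Matrix.mul_neg, Matrix.neg_mul, ← neg_add, smul_neg,
    neg_inj]

theorem submatrix_equiv_iff (e : m ≃ n) {K Q : Matrix n n R} {μ : R} :
    IsInfinitesimalSimilitude (K.submatrix e e) μ (Q.submatrix e e) ↔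
      IsInfinitesimalSimilitude K μ Q := by
  simp only [IsInfinitesimalSimilitude, transpose_submatrix, submatrix_mul_equiv]
  exact (reindex e.symm e.symm).injective.eq_iff (a := Qᵀ * K + K * Q) (b := μ • K)

theorem fromBlocks_zero_iff [DecidableEq n] {K : Matrix n n R} (hK : IsUnit K.det) {μ : R}
    {A : Matrix m m R} {B : Matrix m n R} {C : Matrix n m R} {D : Matrix n n R} :
    IsInfinitesimalSimilitude (fromBlocks 0 0 0 K) μ (fromBlocks A B C D) ↔
      C = 0 ∧ IsInfinitesimalSimilitude K μ D := by
  have hC : K * C = 0 → C = 0 := fun h => by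
    rw [← nonsing_inv_mul_cancel_left K C hK, h, Matrix.mul_zero]
  simp only [IsInfinitesimalSimilitude, fromBlocks_transpose, fromBlocks_multiply, fromBlocks_add,
    fromBlocks_smul, fromBlocks_inj, Matrix.mul_zero, Matrix.zero_mul, add_zero, zero_add,
    smul_zero, true_and]
  constructor
  · rintro ⟨-, hKC, hD⟩
    exact ⟨hC hKC, hD⟩
  · rintro ⟨rfl, hD⟩
    simp [hD]

theorem J_iff [DecidableEq l] {μ : R} {P S T U : Matrix l l R} :
    IsInfinitesimalSimilitude (J l R) μ (fromBlocks P S T U) ↔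
      S.IsSymm ∧ T.IsSymm ∧ U = μ • 1 - Pᵀ := by
  simp only [IsInfinitesimalSimilitude, J, fromBlocks_transpose, fromBlocks_multiply,
    fromBlocks_add, fromBlocks_smul, fromBlocks_inj, Matrix.mul_zero, Matrix.zero_mul,
    Matrix.mul_neg, Matrix.neg_mul, Matrix.mul_one, Matrix.one_mul, add_zero, zero_add,
    smul_zero, smul_neg, IsSymm]
  constructor
  · rintro ⟨hT, hU, -, hS⟩
    refine ⟨neg_add_eq_zero.mp hS, add_neg_eq_zero.mp hT, ?_⟩
    rw [← neg_inj.mp ((neg_add _ _).trans hU), add_sub_cancel_left]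
  · rintro ⟨hS, hT, rfl⟩
    simp [hS, hT, neg_add_eq_sub]

theorem trace_eq_card_mul [DecidableEq l] {μ : R} {D : Matrix (l ⊕ l) (l ⊕ l) R}
    (hD : IsInfinitesimalSimilitude (J l R) μ D) : D.trace = Fintype.card l * μ := by
  rw [← fromBlocks_toBlocks D, J_iff] at hD
  rw [← fromBlocks_toBlocks D, hD.2.2, trace_fromBlocks, trace_sub, trace_transpose, trace_smul,
    trace_one, add_sub_cancel, smul_eq_mul, mul_comm]

end IsInfinitesimalSimilitude

theorem aut_M5_characterization_general {l m R : Type*} [Fintype l] [DecidableEq l] [Fintype m]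
    [CommRing R] (Q : Matrix (m ⊕ (l ⊕ l)) (m ⊕ (l ⊕ l)) R) (hQ : Q.trace = 0) :
    (∃ μ : R, IsInfinitesimalSimilitude (fromBlocks 0 0 0 (J l R)) μ Q) ↔
      ∃ (μ : R) (A : Matrix m m R) (B : Matrix m (l ⊕ l) R) (P S T : Matrix l l R),
        A.trace = -(Fintype.card l * μ) ∧ S.IsSymm ∧ T.IsSymm ∧
          Q = fromBlocks A B 0 (fromBlocks P S T (μ • 1 - Pᵀ)) := by
  refine exists_congr fun μ => ⟨fun h => ?_, ?_⟩
  · obtain ⟨A, B, C, D, rfl⟩ : ∃ A B C D, Q = fromBlocks A B C D :=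
      ⟨_, _, _, _, (fromBlocks_toBlocks Q).symm⟩
    obtain ⟨P, S, T, U, rfl⟩ : ∃ P S T U, D = fromBlocks P S T U :=
      ⟨_, _, _, _, (fromBlocks_toBlocks D).symm⟩
    obtain ⟨rfl, hD⟩ :=
      (IsInfinitesimalSimilitude.fromBlocks_zero_iff (isUnit_det_J l R)).mp h
    rw [trace_fromBlocks, hD.trace_eq_card_mul] at hQ
    obtain ⟨hS, hT, rfl⟩ := IsInfinitesimalSimilitude.J_iff.mp hD
    exact ⟨A, B, P, S, T, eq_neg_of_add_eq_zero_left hQ, hS, hT, rfl⟩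
  · rintro ⟨A, B, P, S, T, -, hS, hT, rfl⟩
    exact (IsInfinitesimalSimilitude.fromBlocks_zero_iff (isUnit_det_J l R)).mpr
      ⟨rfl, IsInfinitesimalSimilitude.J_iff.mpr ⟨hS, hT, rfl⟩⟩

/-- The splitting of the coordinates `0 | 1, 2 | 3, 4` of `ℂ⁵` into the radical of `Jmat'` and two
complementary Lagrangian planes. -/
def radicalLagrangianEquiv : Fin 5 ≃ Fin 1 ⊕ (Fin 2 ⊕ Fin 2) :=
  ((Equiv.sumCongr (Equiv.refl (Fin 1)) (finSumFinEquiv (m := 2) (n := 2))).trans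
    finSumFinEquiv).symm

theorem fromBlocks_submatrix_radicalLagrangianEquiv {R : Type*} (A : Matrix (Fin 1) (Fin 1) R)
    (B : Matrix (Fin 1) (Fin 2 ⊕ Fin 2) R) (C : Matrix (Fin 2 ⊕ Fin 2) (Fin 1) R)
    (P S T U : Matrix (Fin 2) (Fin 2) R) :
    (fromBlocks A B C (fromBlocks P S T U)).submatrix
        radicalLagrangianEquiv radicalLagrangianEquiv =
      !![A 0 0, B 0 (.inl 0), B 0 (.inl 1), B 0 (.inr 0), B 0 (.inr 1);
         C (.inl 0) 0, P 0 0, P 0 1, S 0 0, S 0 1;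
         C (.inl 1) 0, P 1 0, P 1 1, S 1 0, S 1 1;
         C (.inr 0) 0, T 0 0, T 0 1, U 0 0, U 0 1;
         C (.inr 1) 0, T 1 0, T 1 1, U 1 0, U 1 1] := by
  ext i j
  fin_cases i <;> fin_cases j <;> rfl

theorem Jmat'_eq_neg_submatrix_J :
    Jmat' = -(fromBlocks 0 0 0 (J (Fin 2) ℂ)).submatrix
      radicalLagrangianEquiv radicalLagrangianEquiv := by
  rw [J, fromBlocks_submatrix_radicalLagrangianEquiv]
  simp [Jmat']

theorem isInfinitesimalSimilitude_Jmat'_iff {Q : Matrix (Fin 5) (Fin 5) ℂ} {μ : ℂ} :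
    IsInfinitesimalSimilitude Jmat' μ Q ↔
      IsInfinitesimalSimilitude (fromBlocks 0 0 0 (J (Fin 2) ℂ)) μ
        (Q.submatrix radicalLagrangianEquiv.symm radicalLagrangianEquiv.symm) := by
  rw [Jmat'_eq_neg_submatrix_J, IsInfinitesimalSimilitude.neg_form_iff,
    ← IsInfinitesimalSimilitude.submatrix_equiv_iff radicalLagrangianEquiv]
  simp

theorem exists_fromBlocks_iff_exists_entries {R : Type*} [CommRing R]
    (Q : Matrix (Fin 5) (Fin 5) R) :
    (∃ (μ : R) (A : Matrix (Fin 1) (Fin 1) R) (B : Matrix (Fin 1) (Fin 2 ⊕ Fin 2) R)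
        (P S T : Matrix (Fin 2) (Fin 2) R),
        A.trace = -(Fintype.card (Fin 2) * μ) ∧ S.IsSymm ∧ T.IsSymm ∧
          Q.submatrix radicalLagrangianEquiv.symm radicalLagrangianEquiv.symm =
            fromBlocks A B 0 (fromBlocks P S T (μ • 1 - Pᵀ))) ↔
      (∃ lam lam₁ lam₂ lam₃ lam₄ a b c d f g h p q r : R,
        Q = !![-2*lam, lam₁, lam₂, lam₃, lam₄;
               0, a, b, f, g;
               0, c, d, g, h;
               0, p, q, lam - a, -c;
               0, q, r, -b, lam - d]) := by
  have submatrix_symm_eq_iff (X : Matrix (Fin 1 ⊕ (Fin 2 ⊕ Fin 2)) (Fin 1 ⊕ (Fin 2 ⊕ Fin 2)) R) :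
      Q.submatrix radicalLagrangianEquiv.symm radicalLagrangianEquiv.symm = X ↔
        Q = X.submatrix radicalLagrangianEquiv radicalLagrangianEquiv :=
    (reindex radicalLagrangianEquiv radicalLagrangianEquiv).eq_symm_apply.symm
  simp only [submatrix_symm_eq_iff, fromBlocks_submatrix_radicalLagrangianEquiv]
  constructor
  · rintro ⟨μ, A, B, P, S, T, hA, hS, hT, rfl⟩
    have hA₀ : A 0 0 = -2 * μ := by simpa [trace_fin_one] using hA
    refine ⟨μ, B 0 (.inl 0), B 0 (.inl 1), B 0 (.inr 0), B 0 (.inr 1),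
      P 0 0, P 0 1, P 1 0, P 1 1, S 0 0, S 0 1, S 1 1, T 0 0, T 0 1, T 1 1, ?_⟩
    simp [hA₀, hS.apply 0 1, hT.apply 0 1]
  · rintro ⟨lam, lam₁, lam₂, lam₃, lam₄, a, b, c, d, f, g, h, p, q, r, rfl⟩
    refine ⟨lam, !![-2 * lam], of fun _ => Sum.elim ![lam₁, lam₂] ![lam₃, lam₄],
      !![a, b; c, d], !![f, g; g, h], !![p, q; q, r], ?_, ?_, ?_, ?_⟩
    · simp [trace_fin_one]
    · exact IsSymm.ext (by simp [Fin.forall_fin_two])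
    · exact IsSymm.ext (by simp [Fin.forall_fin_two])
    · simp

/-- Characterization of the Lie algebra `aut(M₅)` of a quintic Del Pezzo fivefold:
a traceless `5×5` complex matrix `Q` satisfies `QᵀJ' + J'Q ∈ ⟨J'⟩`
iff it has the displayed shape. -/
theorem aut_M5_characterization (Q : Matrix (Fin 5) (Fin 5) ℂ) (hQ : Q.trace = 0) :
    (∃ μ : ℂ, Qᵀ * Jmat' + Jmat' * Q = μ • Jmat') ↔
      (∃ lam lam₁ lam₂ lam₃ lam₄ a b c d f g h p q r : ℂ,
        Q = !![-2*lam, lam₁, lam₂, lam₃, lam₄;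
               0, a, b, f, g;
               0, c, d, g, h;
               0, p, q, lam - a, -c;
               0, q, r, -b, lam - d]) := by
  have hQ' : (Q.submatrix radicalLagrangianEquiv.symm radicalLagrangianEquiv.symm).trace = 0 :=
    (Equiv.sum_comp radicalLagrangianEquiv.symm Q.diag).trans hQ
  exact (exists_congr fun _ => isInfinitesimalSimilitude_Jmat'_iff).trans
    ((aut_M5_characterization_general _ hQ').trans (exists_fromBlocks_iff_exists_entries Q))
end

section
/- Let Δ^C = {(u,v,w) ∈ ℝ³ : 0 ≤ v ≤ u/2, 0 ≤ w ≤ 1−u+v, and w ≤ 1+2u−5v}. Then ∫_{Δ^C} (1−u+v−w)(1+2u−5v−w) du dv dw = 1/24; equivalently, (1/(5/4!)) · ∫_{Δ^C} 2(1−u+v−w)(1+2u−5v−w)/2! du dv dw = 1/5. -/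
open MeasureTheory

/-- Region `Δ^C = {(u,v,w) : 0 ≤ v ≤ u/2, 0 ≤ w ≤ 1−u+v, w ≤ 1+2u−5v}` in ℝ³,
with coordinates `(u, v, w)`. -/
def DeltaC : Set (ℝ × ℝ × ℝ) :=
  {p | 0 ≤ p.2.1 ∧ p.2.1 ≤ p.1 / 2 ∧ 0 ≤ p.2.2 ∧ p.2.2 ≤ 1 - p.1 + p.2.1 ∧
       p.2.2 ≤ 1 + 2 * p.1 - 5 * p.2.1}

/-!
In the coordinates `s = u - 2v` and `t = 1 - v - w` the integrand is `(t - s)(t + 2s)`, and `Δ^C` is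
the region `0 ≤ s ≤ t` over the standard triangle `0 ≤ v`, `0 ≤ w`, `v + w ≤ 1`: the remaining
inequality `0 ≤ t + 2s` is automatic. Integrating out `u` leaves `(5/6) t³`, and
`∫ tⁿ = 1 / ((n + 1)(n + 2))` over the triangle.
-/

section Fubini

variable {β E : Type*} [MeasurableSpace β] {ν : Measure β} [SFinite ν]
  [NormedAddCommGroup E] [NormedSpace ℝ E]

theorem setIntegral_prod_eq_setIntegral_intervalIntegral {s : Set (ℝ × β)} {t : Set β}
    {a b : β → ℝ} {f : ℝ × β → E} (hs : MeasurableSet s) (ht : MeasurableSet t)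
    (hab : ∀ y ∈ t, a y ≤ b y)
    (mem_iff : ∀ x y, (x, y) ∈ s ↔ y ∈ t ∧ x ∈ Set.Icc (a y) (b y))
    (hf : IntegrableOn f s (volume.prod ν)) :
    ∫ p in s, f p ∂(volume.prod ν) = ∫ y in t, (∫ x in a y..b y, f (x, y)) ∂ν := by
  rw [← integral_indicator hs, integral_prod_symm _ (hf.integrable_indicator hs),
    ← integral_indicator ht]
  congr with y
  by_cases hy : y ∈ t
  · have fiber : (fun x ↦ s.indicator f (x, y)) =
        (Set.Icc (a y) (b y)).indicator fun x ↦ f (x, y) := by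
      classical
      ext x
      simp [Set.indicator_apply, mem_iff, hy]
    rw [fiber, integral_indicator measurableSet_Icc, integral_Icc_eq_integral_Ioc,
      Set.indicator_of_mem hy, intervalIntegral.integral_of_le (hab y hy)]
  · simp [mem_iff, hy]

end Fubini

theorem integral_sub_left_pow (a b : ℝ) (n : ℕ) :
    ∫ x in a..b, (b - x) ^ n = (b - a) ^ (n + 1) / (n + 1) := by
  simp [intervalIntegral.integral_comp_sub_left (fun x ↦ x ^ n)]

theorem integral_sub_mul_sub_add_two_mul_sub (a b : ℝ) :
    ∫ x in a..b, (b - x) * (b - a + 2 * (x - a)) = 5 / 6 * (b - a) ^ 3 := by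
  calc ∫ x in a..b, (b - x) * (b - a + 2 * (x - a))
      = ∫ x in a..b, (3 * (b - a) * (b - x) ^ 1 - 2 * (b - x) ^ 2) := by
        congr with x
        ring
    _ = 3 * (b - a) * (∫ x in a..b, (b - x) ^ 1) - 2 * ∫ x in a..b, (b - x) ^ 2 := by
        rw [intervalIntegral.integral_sub, intervalIntegral.integral_const_mul,
          intervalIntegral.integral_const_mul] <;>
        exact Continuous.intervalIntegrable (by fun_prop) a b
    _ = 5 / 6 * (b - a) ^ 3 := by
        rw [integral_sub_left_pow, integral_sub_left_pow]
        push_cast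
        ring

/-- The triangle with vertices `(0, 0)`, `(1, 0)` and `(0, 1)`, the projection of `DeltaC` to the
`(v, w)`-plane. -/
def stdTriangle : Set (ℝ × ℝ) :=
  {q | 0 ≤ q.1 ∧ 0 ≤ q.2 ∧ q.1 + q.2 ≤ 1}

theorem mk_mem_stdTriangle_iff (v w : ℝ) :
    (v, w) ∈ stdTriangle ↔ w ∈ Set.Icc 0 1 ∧ v ∈ Set.Icc 0 (1 - w) := by
  simp only [stdTriangle, Set.mem_ofPred_eq, Set.mem_Icc]
  grind

theorem isClosed_stdTriangle : IsClosed stdTriangle := by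
  simp only [stdTriangle, Set.ofPred_and]
  refine .inter ?_ (.inter ?_ ?_) <;> exact isClosed_le (by fun_prop) (by fun_prop)

theorem isCompact_stdTriangle : IsCompact stdTriangle := by
  refine (isCompact_Icc (a := ((0, 0) : ℝ × ℝ)) (b := (1, 1))).of_isClosed_subset
    isClosed_stdTriangle ?_
  rintro ⟨v, w⟩ ⟨hv, hw, hvw⟩
  exact ⟨⟨hv, hw⟩, by linarith, by linarith⟩

theorem setIntegral_stdTriangle_pow (n : ℕ) :
    ∫ q in stdTriangle, (1 - q.1 - q.2) ^ n = 1 / (((n : ℝ) + 1) * (n + 2)) := by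
  have integrable : IntegrableOn (fun q : ℝ × ℝ ↦ (1 - q.1 - q.2) ^ n) stdTriangle :=
    ContinuousOn.integrableOn_compact isCompact_stdTriangle (by fun_prop)
  calc ∫ q in stdTriangle, (1 - q.1 - q.2) ^ n
      = ∫ w in Set.Icc (0 : ℝ) 1, ∫ v in (0 : ℝ)..1 - w, (1 - v - w) ^ n :=
        setIntegral_prod_eq_setIntegral_intervalIntegral isClosed_stdTriangle.measurableSet
          measurableSet_Icc (fun _ hw ↦ sub_nonneg.2 hw.2) mk_mem_stdTriangle_iff integrable
    _ = ∫ w in (0 : ℝ)..1, (1 - w) ^ (n + 1) / (n + 1) := by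
        simp_rw [sub_right_comm (1 : ℝ), integral_sub_left_pow, sub_zero]
        rw [integral_Icc_eq_integral_Ioc, intervalIntegral.integral_of_le zero_le_one]
    _ = 1 / (((n : ℝ) + 1) * (n + 2)) := by
        rw [intervalIntegral.integral_div, integral_sub_left_pow]
        push_cast
        field_simp
        ring

theorem mk_mem_DeltaC_iff (u : ℝ) (q : ℝ × ℝ) :
    (u, q) ∈ DeltaC ↔ q ∈ stdTriangle ∧ u ∈ Set.Icc (2 * q.1) (1 + q.1 - q.2) := by
  simp only [DeltaC, stdTriangle, Set.mem_ofPred_eq, Set.mem_Icc]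
  grind

theorem isClosed_DeltaC : IsClosed DeltaC := by
  simp only [DeltaC, Set.ofPred_and]
  refine .inter ?_ (.inter ?_ (.inter ?_ (.inter ?_ ?_))) <;>
    exact isClosed_le (by fun_prop) (by fun_prop)

theorem isCompact_DeltaC : IsCompact DeltaC := by
  refine (isCompact_Icc.prod isCompact_stdTriangle).of_isClosed_subset
    (s := Set.Icc (0 : ℝ) 2 ×ˢ stdTriangle) isClosed_DeltaC ?_
  rintro ⟨u, q⟩ hp
  obtain ⟨⟨hv, hw, hvw⟩, hlow, hupp⟩ := (mk_mem_DeltaC_iff u q).1 hp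
  exact ⟨⟨by linarith, by linarith⟩, hv, hw, hvw⟩

theorem setIntegral_DeltaC_eq_setIntegral_stdTriangle {E : Type*} [NormedAddCommGroup E]
    [NormedSpace ℝ E] {f : ℝ × ℝ × ℝ → E} (hf : ContinuousOn f DeltaC) :
    ∫ p in DeltaC, f p = ∫ q in stdTriangle, ∫ u in 2 * q.1..1 + q.1 - q.2, f (u, q) :=
  setIntegral_prod_eq_setIntegral_intervalIntegral isClosed_DeltaC.measurableSet
    isClosed_stdTriangle.measurableSet (fun _ ⟨_, _, hvw⟩ ↦ by linarith) mk_mem_DeltaC_iff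
    (hf.integrableOn_compact isCompact_DeltaC)

theorem integral_DeltaC_fiber (v w : ℝ) :
    ∫ u in 2 * v..1 + v - w, (1 - u + v - w) * (1 + 2 * u - 5 * v - w) =
      5 / 6 * (1 - v - w) ^ 3 := by
  convert integral_sub_mul_sub_add_two_mul_sub (2 * v) (1 + v - w) using 3 <;> ring

/-- The computation `S(W^F_{•••}; C) = 1/5`:
`∫_{Δ^C} (1−u+v−w)(1+2u−5v−w) du dv dw = 1/24`. -/
theorem S_WF_C :
    ∫ p in DeltaC,
        ((1 - p.1 + p.2.1 - p.2.2) * (1 + 2 * p.1 - 5 * p.2.1 - p.2.2)) = 1 / 24 := by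
  calc ∫ p in DeltaC, (1 - p.1 + p.2.1 - p.2.2) * (1 + 2 * p.1 - 5 * p.2.1 - p.2.2)
      = ∫ q in stdTriangle, ∫ u in 2 * q.1..1 + q.1 - q.2,
          (1 - u + q.1 - q.2) * (1 + 2 * u - 5 * q.1 - q.2) :=
        setIntegral_DeltaC_eq_setIntegral_stdTriangle (by fun_prop)
    _ = 5 / 6 * ∫ q in stdTriangle, (1 - q.1 - q.2) ^ 3 := by
        simp_rw [integral_DeltaC_fiber, integral_const_mul]
    _ = 1 / 24 := by
        rw [setIntegral_stdTriangle_pow]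
        norm_num
end

section
/- Let Δ_A = {(t,s,r) ∈ ℝ³ : 0<t<1, 0<s<1, ((s<t and r>0) or (s>t and r>s−t)), and ((s+t<1 and r<s) or (s+t>1 and r<1−t))}, Δ_B = {(t,s,r) : 0<t<1, −1+t+s−2r>0, and ((0<s<1 and s+t>1 and r>1−t) or (1<s<1+t and r>s−t))}, Δ_{C1} = {(t,s,r) : 0<t<1, t<s<1, 0<r<s−t}, Δ_{C2} = {(t,s,r) : 0<t<1, 1<s<1+t, 0<r<s−t}, and set f_A = 6r(1−t−r)(s−r) + 3(1−t)(s−r)², f_B = 3(1−t)(1−t+s−2r)², f_{C1} = 6(s−t)(1−s)t + 3(1−t)t², f_{C2} = 3(1−t)(1+t−s)². Then 4·(∫_{Δ_A} f_A + ∫_{Δ_B} f_B + ∫_{Δ_{C1}} f_{C1} + ∫_{Δ_{C2}} f_{C2}) = 154/405, i.e. the sum of the four integrals equals 77/810. -/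
open MeasureTheory

/-- Region `Δ_A` in ℝ³, coordinates `(t, s, r)`. -/
def DeltaA : Set (ℝ × ℝ × ℝ) :=
  {p | 0 < p.1 ∧ p.1 < 1 ∧ 0 < p.2.1 ∧ p.2.1 < 1 ∧
       ((p.2.1 < p.1 ∧ p.2.2 > 0) ∨ (p.2.1 > p.1 ∧ p.2.2 > p.2.1 - p.1)) ∧
       ((p.2.1 + p.1 < 1 ∧ p.2.2 < p.2.1) ∨ (p.2.1 + p.1 > 1 ∧ p.2.2 < 1 - p.1))}

/-- Region `Δ_B` in ℝ³, coordinates `(t, s, r)`. -/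
def DeltaB : Set (ℝ × ℝ × ℝ) :=
  {p | 0 < p.1 ∧ p.1 < 1 ∧ -1 + p.1 + p.2.1 - 2 * p.2.2 > 0 ∧
       ((0 < p.2.1 ∧ p.2.1 < 1 ∧ p.2.1 + p.1 > 1 ∧ p.2.2 > 1 - p.1) ∨
        (1 < p.2.1 ∧ p.2.1 < 1 + p.1 ∧ p.2.2 > p.2.1 - p.1))}

/-- Region `Δ_{C1}` in ℝ³, coordinates `(t, s, r)`. -/
def DeltaC1 : Set (ℝ × ℝ × ℝ) :=
  {p | 0 < p.1 ∧ p.1 < 1 ∧ p.1 < p.2.1 ∧ p.2.1 < 1 ∧ 0 < p.2.2 ∧ p.2.2 < p.2.1 - p.1}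

/-- Region `Δ_{C2}` in ℝ³, coordinates `(t, s, r)`. -/
def DeltaC2 : Set (ℝ × ℝ × ℝ) :=
  {p | 0 < p.1 ∧ p.1 < 1 ∧ 1 < p.2.1 ∧ p.2.1 < 1 + p.1 ∧ 0 < p.2.2 ∧ p.2.2 < p.2.1 - p.1}

open Set

/-!
Each region is, up to a null set, of the form `e < x < g`, `c x < y < d x`, `a x y < z < b x y`,
so that Fubini turns the integral into an iterated one. For `Δ_{C1}` and `Δ_{C2}` this is immediate
in the coordinates `(t, s, r)`. The case distinctions defining `Δ_A` and `Δ_B` come from describing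
`r` in terms of `s`; after exchanging `s` and `r` they disappear, at the cost of the null planes
`s = t`, `s = 1 - t` and `s = 1`: `Δ_A` becomes `0 < r < 1 - t`, `r < s < r + t`, and `Δ_B` becomes
`1 - t < r < 2t - 1`, `2r + 1 - t < s < r + t`, which is nonempty only for `t > 2/3`. The four
integrals are `1/40`, `11/3240`, `1/24` and `1/40`.
-/

lemma prodMk_preimage_fibered {α β : Type*} {s : Set α} {T : α → Set β} {x : α} (hx : x ∈ s) :
    Prod.mk x ⁻¹' {p : α × β | p.1 ∈ s ∧ p.2 ∈ T p.1} = T x := by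
  ext y
  simp [hx]

section Fubini

variable {α β γ E : Type*} [MeasurableSpace α] [MeasurableSpace β] [MeasurableSpace γ]
  [NormedAddCommGroup E] {μ : Measure α} {ν : Measure β} {ρ : Measure γ}

lemma integrableOn_fiber_ae [SFinite μ] [SFinite ν] {s : Set α} {T : α → Set β} {f : α × β → E}
    (hU : MeasurableSet {p : α × β | p.1 ∈ s ∧ p.2 ∈ T p.1})
    (hf : IntegrableOn f {p : α × β | p.1 ∈ s ∧ p.2 ∈ T p.1} (μ.prod ν)) :
    ∀ᵐ x ∂μ, x ∈ s → IntegrableOn (fun y ↦ f (x, y)) (T x) ν := by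
  filter_upwards [(hf.integrable_indicator hU).prod_right_ae] with x hx hxs
  rw [← prodMk_preimage_fibered (T := T) hxs,
    ← integrable_indicator_iff (measurable_prodMk_left hU)]
  exact hx

variable [NormedSpace ℝ E]

lemma setIntegral_prod_fiber [SFinite μ] [SFinite ν] {s : Set α} {T : α → Set β} {f : α × β → E}
    (hs : MeasurableSet s) (hU : MeasurableSet {p : α × β | p.1 ∈ s ∧ p.2 ∈ T p.1})
    (hf : IntegrableOn f {p : α × β | p.1 ∈ s ∧ p.2 ∈ T p.1} (μ.prod ν)) :
    ∫ p in {p : α × β | p.1 ∈ s ∧ p.2 ∈ T p.1}, f p ∂μ.prod ν =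
      ∫ x in s, ∫ y in T x, f (x, y) ∂ν ∂μ := by
  rw [← integral_indicator hU, integral_prod _ (hf.integrable_indicator hU),
    ← integral_indicator hs]
  congr with x
  by_cases hx : x ∈ s
  · rw [indicator_of_mem hx, ← prodMk_preimage_fibered (T := T) hx,
      ← integral_indicator (measurable_prodMk_left hU)]
    rfl
  · simp [hx]

lemma ae_fst_snd_ne_comp_fst [MeasurableEq β] [SFinite ν] [SFinite ρ]
    [NullSingletonClass ν] {g : α → β} (hg : Measurable g) :
    ∀ᵐ p ∂μ.prod (ν.prod ρ), p.2.1 ≠ g p.1 := by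
  have measurable_graph : MeasurableSet {p : α × β × γ | p.2.1 = g p.1} :=
    measurableSet_eq_fun (by fun_prop) (by fun_prop)
  refine (Measure.ae_prod_iff_ae_ae measurable_graph.compl).2 (.of_forall fun x ↦ ?_)
  exact Measure.quasiMeasurePreserving_fst.ae (ν.ae_ne (g x))

end Fubini

lemma setIntegral_preimage_prodMap_id_swap {α β γ E : Type*} [MeasureSpace α] [MeasureSpace β]
    [MeasureSpace γ] [SFinite (volume : Measure α)] [SFinite (volume : Measure β)]
    [SFinite (volume : Measure γ)] [NormedAddCommGroup E] [NormedSpace ℝ E]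
    (f : α × β × γ → E) (R : Set (α × γ × β)) :
    ∫ p in Prod.map id Prod.swap ⁻¹' R, f p = ∫ q in R, f (q.1, q.2.2, q.2.1) := by
  have preserving : MeasurePreserving (Prod.map id Prod.swap : α × β × γ → α × γ × β) :=
    (MeasurePreserving.id volume).prod Measure.measurePreserving_swap
  have embedding : MeasurableEmbedding (Prod.map id Prod.swap : α × β × γ → α × γ × β) :=
    ((MeasurableEquiv.refl α).prodCongr MeasurableEquiv.prodComm).measurableEmbedding
  exact preserving.setIntegral_preimage_emb embedding (fun q ↦ f (q.1, q.2.2, q.2.1)) R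

/-- The open region `e < x < g`, `c x < y < d x`, `a x y < z < b x y` of `ℝ³`, over which a
triple integral is an iterated one in the order of the coordinates. -/
def iteratedRegion (e g : ℝ) (c d : ℝ → ℝ) (a b : ℝ → ℝ → ℝ) : Set (ℝ × ℝ × ℝ) :=
  {p | p.1 ∈ Ioo e g ∧ p.2 ∈ regionBetween (a p.1) (b p.1) (Ioo (c p.1) (d p.1))}

section iteratedRegion

variable {e g : ℝ} {c d : ℝ → ℝ} {a b : ℝ → ℝ → ℝ}

lemma mem_iteratedRegion {x y z : ℝ} : (x, y, z) ∈ iteratedRegion e g c d a b ↔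
    x ∈ Ioo e g ∧ y ∈ Ioo (c x) (d x) ∧ z ∈ Ioo (a x y) (b x y) :=
  Iff.rfl

lemma measurableSet_iteratedRegion (hc : Measurable c) (hd : Measurable d)
    (ha : Measurable a.uncurry) (hb : Measurable b.uncurry) :
    MeasurableSet (iteratedRegion e g c d a b) := by
  have measurable_a : Measurable fun p : ℝ × ℝ × ℝ ↦ a p.1 p.2.1 :=
    ha.comp (measurable_fst.prodMk measurable_snd.fst)
  have measurable_b : Measurable fun p : ℝ × ℝ × ℝ ↦ b p.1 p.2.1 :=
    hb.comp (measurable_fst.prodMk measurable_snd.fst)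
  exact (measurable_fst measurableSet_Ioo).inter
    (((measurableSet_lt (hc.comp measurable_fst) measurable_snd.fst).inter
      (measurableSet_lt measurable_snd.fst (hd.comp measurable_fst))).inter
    ((measurableSet_lt measurable_a measurable_snd.snd).inter
      (measurableSet_lt measurable_snd.snd measurable_b)))

lemma Ioo_subset_image_lineMap (x y : ℝ) : Ioo x y ⊆ AffineMap.lineMap x y '' Icc (0 : ℝ) 1 := by
  intro z hz
  rw [← segment_eq_image_lineMap, segment_eq_Icc (hz.1.trans hz.2).le]
  exact Ioo_subset_Icc_self hz

lemma exists_isCompact_iteratedRegion_subset (hc : Continuous c) (hd : Continuous d)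
    (ha : Continuous a.uncurry) (hb : Continuous b.uncurry) :
    ∃ K, IsCompact K ∧ iteratedRegion e g c d a b ⊆ K := by
  let Y (x u : ℝ) : ℝ := AffineMap.lineMap (c x) (d x) u
  let Z (x y v : ℝ) : ℝ := AffineMap.lineMap (a x y) (b x y) v
  have continuous_Y : Continuous fun p : ℝ × ℝ × ℝ ↦ Y p.1 p.2.1 := by fun_prop
  have continuous_Z : Continuous fun p : ℝ × ℝ × ℝ ↦ Z p.1 (Y p.1 p.2.1) p.2.2 :=
    (ha.comp₂ continuous_fst continuous_Y).lineMap (hb.comp₂ continuous_fst continuous_Y)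
      continuous_snd.snd
  refine ⟨(fun p : ℝ × ℝ × ℝ ↦ (p.1, Y p.1 p.2.1, Z p.1 (Y p.1 p.2.1) p.2.2)) ''
    (Icc e g ×ˢ Icc 0 1 ×ˢ Icc 0 1), ?_, ?_⟩
  · exact (isCompact_Icc.prod (isCompact_Icc.prod isCompact_Icc)).image
      (continuous_fst.prodMk (continuous_Y.prodMk continuous_Z))
  · rintro ⟨x, y, z⟩ hxyz
    obtain ⟨hx, hy, hz⟩ := mem_iteratedRegion.1 hxyz
    obtain ⟨u, hu, rfl⟩ := Ioo_subset_image_lineMap _ _ hy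
    obtain ⟨v, hv, rfl⟩ := Ioo_subset_image_lineMap _ _ hz
    exact ⟨(x, u, v), ⟨Ioo_subset_Icc_self hx, hu, hv⟩, rfl⟩

lemma setIntegral_iteratedRegion {E : Type*} [NormedAddCommGroup E] [NormedSpace ℝ E]
    {f : ℝ × ℝ × ℝ → E} (heg : e ≤ g) (hcd : ∀ x ∈ Ioo e g, c x ≤ d x)
    (hab : ∀ x ∈ Ioo e g, ∀ y ∈ Ioo (c x) (d x), a x y ≤ b x y)
    (hf : Continuous f := by fun_prop) (hc : Continuous c := by fun_prop)
    (hd : Continuous d := by fun_prop) (ha : Continuous a.uncurry := by fun_prop)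
    (hb : Continuous b.uncurry := by fun_prop) :
    ∫ p in iteratedRegion e g c d a b, f p =
      ∫ x in e..g, ∫ y in c x..d x, ∫ z in a x y..b x y, f (x, y, z) := by
  let fiber (x : ℝ) : Set (ℝ × ℝ) := regionBetween (a x) (b x) (Ioo (c x) (d x))
  have measurable_region := measurableSet_iteratedRegion (e := e) (g := g)
    hc.measurable hd.measurable ha.measurable hb.measurable
  have measurable_fiber (x : ℝ) : MeasurableSet (fiber x) :=
    measurableSet_regionBetween (ha.measurable.comp measurable_prodMk_left)
      (hb.measurable.comp measurable_prodMk_left) measurableSet_Ioo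
  have integrable_region : IntegrableOn f (iteratedRegion e g c d a b) := by
    obtain ⟨K, hK, region_subset⟩ := exists_isCompact_iteratedRegion_subset hc hd ha hb
    exact (hf.continuousOn.integrableOn_compact hK).mono_set region_subset
  rw [intervalIntegral.integral_of_le heg, integral_Ioc_eq_integral_Ioo]
  refine (setIntegral_prod_fiber (T := fiber) measurableSet_Ioo measurable_region
    integrable_region).trans (setIntegral_congr_ae measurableSet_Ioo ?_)
  filter_upwards [integrableOn_fiber_ae (T := fiber) measurable_region integrable_region]
    with x integrable_fiber hx
  rw [intervalIntegral.integral_of_le (hcd x hx), integral_Ioc_eq_integral_Ioo]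
  refine (setIntegral_prod_fiber (T := fun y ↦ Ioo (a x y) (b x y)) measurableSet_Ioo
    (measurable_fiber x) (integrable_fiber hx)).trans
      (setIntegral_congr_fun measurableSet_Ioo fun y hy ↦ ?_)
  rw [intervalIntegral.integral_of_le (hab x hx y hy), integral_Ioc_eq_integral_Ioo]

end iteratedRegion

lemma integral_eq_sub_of_deriv_eq {E : Type*} [NormedAddCommGroup E] [NormedSpace ℝ E]
    [CompleteSpace E] {F f : ℝ → E} (hF : ContDiff ℝ 1 F) (hderiv : deriv F = f) (a b : ℝ) :
    ∫ x in a..b, f x = F b - F a :=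
  intervalIntegral.integral_deriv_eq_sub' F hderiv
    (fun _ _ ↦ hF.differentiable one_ne_zero _)
    (hderiv ▸ hF.continuous_deriv le_rfl).continuousOn

lemma DeltaA_ae_eq : DeltaA =ᵐ[volume] Prod.map id Prod.swap ⁻¹'
    iteratedRegion 0 1 (fun _ ↦ 0) (fun t ↦ 1 - t) (fun _ r ↦ r) (fun t r ↦ r + t) := by
  have ae_ne_t : ∀ᵐ p : ℝ × ℝ × ℝ, p.2.1 ≠ p.1 := ae_fst_snd_ne_comp_fst measurable_id
  have ae_ne_one_sub_t : ∀ᵐ p : ℝ × ℝ × ℝ, p.2.1 ≠ 1 - p.1 :=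
    ae_fst_snd_ne_comp_fst (g := fun t : ℝ ↦ 1 - t) (by fun_prop)
  filter_upwards [ae_ne_t, ae_ne_one_sub_t] with ⟨t, s, r⟩ hst hst'
  refine propext (?_ : (t, s, r) ∈ DeltaA ↔ (t, r, s) ∈ iteratedRegion _ _ _ _ _ _)
  simp only [DeltaA, mem_iteratedRegion, mem_ofPred_eq, mem_Ioo]
  grind

lemma DeltaB_ae_eq : DeltaB =ᵐ[volume] Prod.map id Prod.swap ⁻¹'
    iteratedRegion (2 / 3) 1 (fun t ↦ 1 - t) (fun t ↦ 2 * t - 1)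
      (fun t r ↦ 2 * r + 1 - t) (fun t r ↦ r + t) := by
  have ae_ne_one : ∀ᵐ p : ℝ × ℝ × ℝ, p.2.1 ≠ 1 :=
    ae_fst_snd_ne_comp_fst (g := fun _ ↦ 1) measurable_const
  filter_upwards [ae_ne_one] with ⟨t, s, r⟩ hs
  refine propext (?_ : (t, s, r) ∈ DeltaB ↔ (t, r, s) ∈ iteratedRegion _ _ _ _ _ _)
  simp only [DeltaB, mem_iteratedRegion, mem_ofPred_eq, mem_Ioo]
  grind

lemma DeltaC1_eq : DeltaC1 =
    iteratedRegion 0 1 (fun t ↦ t) (fun _ ↦ 1) (fun _ _ ↦ 0) (fun t s ↦ s - t) := by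
  ext ⟨t, s, r⟩
  simp only [DeltaC1, mem_iteratedRegion, mem_ofPred_eq, mem_Ioo, and_assoc]

lemma DeltaC2_eq : DeltaC2 =
    iteratedRegion 0 1 (fun _ ↦ 1) (fun t ↦ 1 + t) (fun _ _ ↦ 0) (fun t s ↦ s - t) := by
  ext ⟨t, s, r⟩
  simp only [DeltaC2, mem_iteratedRegion, mem_ofPred_eq, mem_Ioo, and_assoc]

lemma setIntegral_DeltaA :
    ∫ p in DeltaA, (6 * p.2.2 * (1 - p.1 - p.2.2) * (p.2.1 - p.2.2) +
      3 * (1 - p.1) * (p.2.1 - p.2.2) ^ 2) = 1 / 40 := by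
  have integral_s (t r : ℝ) :
      ∫ s in r..r + t, (6 * r * (1 - t - r) * (s - r) + 3 * (1 - t) * (s - r) ^ 2) =
        3 * r * (1 - t - r) * t ^ 2 + (1 - t) * t ^ 3 := by
    rw [integral_eq_sub_of_deriv_eq
      (F := fun s ↦ 3 * r * (1 - t - r) * (s - r) ^ 2 + (1 - t) * (s - r) ^ 3)
      (by fun_prop)
      (by ext; simp (disch := fun_prop) [deriv_fun_add, deriv_fun_sub]; ring)]
    ring
  have integral_r (t : ℝ) :
      ∫ r in 0..1 - t, (3 * r * (1 - t - r) * t ^ 2 + (1 - t) * t ^ 3) =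
        t ^ 2 * (1 - t) ^ 3 / 2 + t ^ 3 * (1 - t) ^ 2 := by
    rw [integral_eq_sub_of_deriv_eq
      (F := fun r ↦ t ^ 2 * (3 / 2 * (1 - t) * r ^ 2 - r ^ 3) + (1 - t) * t ^ 3 * r)
      (by fun_prop)
      (by ext; simp (disch := fun_prop) [deriv_fun_add, deriv_fun_sub]; ring)]
    ring
  have integral_t :
      ∫ t in (0 : ℝ)..1, (t ^ 2 * (1 - t) ^ 3 / 2 + t ^ 3 * (1 - t) ^ 2) = 1 / 40 := by
    rw [integral_eq_sub_of_deriv_eq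
      (F := fun t ↦ t ^ 3 / 6 - t ^ 4 / 8 - t ^ 5 / 10 + t ^ 6 / 12)
      (by fun_prop)
      (by ext; simp (disch := fun_prop) [deriv_fun_add, deriv_fun_sub]; ring)]
    ring
  rw [setIntegral_congr_set DeltaA_ae_eq, setIntegral_preimage_prodMap_id_swap,
    setIntegral_iteratedRegion (by norm_num) (by grind) (by grind)]
  simp only [integral_s, integral_r, integral_t]

lemma setIntegral_DeltaB :
    ∫ p in DeltaB, 3 * (1 - p.1) * (1 - p.1 + p.2.1 - 2 * p.2.2) ^ 2 = 11 / 3240 := by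
  have integral_s (t r : ℝ) :
      ∫ s in 2 * r + 1 - t..r + t, (3 * (1 - t) * (1 - t + s - 2 * r) ^ 2) =
        (1 - t) * ((1 - r) ^ 3 - 8 * (1 - t) ^ 3) := by
    rw [integral_eq_sub_of_deriv_eq
      (F := fun s ↦ (1 - t) * (1 - t + s - 2 * r) ^ 3)
      (by fun_prop)
      (by ext; simp (disch := fun_prop) [deriv_fun_sub]; ring)]
    ring
  have integral_r (t : ℝ) :
      ∫ r in 1 - t..2 * t - 1, ((1 - t) * ((1 - r) ^ 3 - 8 * (1 - t) ^ 3)) =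
        t ^ 4 * (1 - t) / 4 - 8 * (1 - t) ^ 4 + 20 * (1 - t) ^ 5 := by
    rw [integral_eq_sub_of_deriv_eq
      (F := fun r ↦ -((1 - t) / 4) * (1 - r) ^ 4 - 8 * (1 - t) ^ 4 * r)
      (by fun_prop)
      (by ext; simp (disch := fun_prop) [deriv_fun_sub]; ring)]
    ring
  have integral_t :
      ∫ t in (2 / 3 : ℝ)..1, (t ^ 4 * (1 - t) / 4 - 8 * (1 - t) ^ 4 + 20 * (1 - t) ^ 5) =
        11 / 3240 := by
    rw [integral_eq_sub_of_deriv_eq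
      (F := fun t ↦ t ^ 5 / 20 - t ^ 6 / 24 + 8 / 5 * (1 - t) ^ 5 - 10 / 3 * (1 - t) ^ 6)
      (by fun_prop)
      (by ext; simp (disch := fun_prop) [deriv_fun_add, deriv_fun_sub]; ring)]
    ring
  rw [setIntegral_congr_set DeltaB_ae_eq, setIntegral_preimage_prodMap_id_swap,
    setIntegral_iteratedRegion (by norm_num) (by grind) (by grind)]
  simp only [integral_s, integral_r, integral_t]

lemma setIntegral_DeltaC1 :
    ∫ p in DeltaC1, (6 * (p.2.1 - p.1) * (1 - p.2.1) * p.1 + 3 * (1 - p.1) * p.1 ^ 2) = 1 / 24 := by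
  have integral_s (t : ℝ) :
      ∫ s in t..1, ((s - t) * (6 * (s - t) * (1 - s) * t + 3 * (1 - t) * t ^ 2)) =
        t * (1 - t) ^ 4 / 2 + 3 / 2 * t ^ 2 * (1 - t) ^ 3 := by
    rw [integral_eq_sub_of_deriv_eq
      (F := fun s ↦ t * (2 * (1 - t) * (s - t) ^ 3 - 3 / 2 * (s - t) ^ 4) +
        3 / 2 * (1 - t) * t ^ 2 * (s - t) ^ 2)
      (by fun_prop)
      (by ext; simp (disch := fun_prop) [deriv_fun_add, deriv_fun_sub]; ring)]
    ring
  have integral_t :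
      ∫ t in (0 : ℝ)..1, (t * (1 - t) ^ 4 / 2 + 3 / 2 * t ^ 2 * (1 - t) ^ 3) = 1 / 24 := by
    rw [integral_eq_sub_of_deriv_eq
      (F := fun t ↦ t ^ 2 / 4 - t ^ 3 / 6 - 3 / 8 * t ^ 4 + t ^ 5 / 2 - t ^ 6 / 6)
      (by fun_prop)
      (by ext; simp (disch := fun_prop) [deriv_fun_add, deriv_fun_sub]; ring)]
    ring
  rw [DeltaC1_eq, setIntegral_iteratedRegion (by norm_num) (by grind) (by grind)]
  simp only [intervalIntegral.integral_const, smul_eq_mul, sub_zero, integral_s, integral_t]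

lemma setIntegral_DeltaC2 :
    ∫ p in DeltaC2, 3 * (1 - p.1) * (1 + p.1 - p.2.1) ^ 2 = 1 / 40 := by
  have integral_s (t : ℝ) :
      ∫ s in 1..1 + t, ((s - t) * (3 * (1 - t) * (1 + t - s) ^ 2)) =
        (1 - t) * (t ^ 3 - 3 / 4 * t ^ 4) := by
    rw [integral_eq_sub_of_deriv_eq
      (F := fun s ↦ (1 - t) * (3 / 4 * (1 + t - s) ^ 4 - (1 + t - s) ^ 3))
      (by fun_prop)
      (by ext; simp (disch := fun_prop) [deriv_fun_sub]; ring)]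
    ring
  have integral_t :
      ∫ t in (0 : ℝ)..1, ((1 - t) * (t ^ 3 - 3 / 4 * t ^ 4)) = 1 / 40 := by
    rw [integral_eq_sub_of_deriv_eq
      (F := fun t ↦ t ^ 4 / 4 - 7 / 20 * t ^ 5 + t ^ 6 / 8)
      (by fun_prop)
      (by ext; simp (disch := fun_prop) [deriv_fun_add, deriv_fun_sub]; ring)]
    ring
  rw [DeltaC2_eq, setIntegral_iteratedRegion (by norm_num) (by grind) (by grind)]
  simp only [intervalIntegral.integral_const, smul_eq_mul, sub_zero, integral_s, integral_t]

/-- The computation `S(W^{E_l}_{•••}; E_C) = 154/405`. -/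
theorem S_WEl_EC :
    4 * ((∫ p in DeltaA,
            (6 * p.2.2 * (1 - p.1 - p.2.2) * (p.2.1 - p.2.2) +
              3 * (1 - p.1) * (p.2.1 - p.2.2) ^ 2)) +
         (∫ p in DeltaB, 3 * (1 - p.1) * (1 - p.1 + p.2.1 - 2 * p.2.2) ^ 2) +
         (∫ p in DeltaC1,
            (6 * (p.2.1 - p.1) * (1 - p.2.1) * p.1 + 3 * (1 - p.1) * p.1 ^ 2)) +
         (∫ p in DeltaC2, 3 * (1 - p.1) * (1 + p.1 - p.2.1) ^ 2)) = 154 / 405 := by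
  rw [setIntegral_DeltaA, setIntegral_DeltaB, setIntegral_DeltaC1, setIntegral_DeltaC2]
  norm_num
end

section
/- Let Γ = {(t,s,r) ∈ ℝ³ : 0<t<1, −1+t+s−2r>0, ((0<s<1 and s+t>1 and r>1−t) or (1<s<1+t and r>s−t)), and 1−t+2s−2r>0}, and let Δ_A = {(t,s,r) : 0<t<1, 0<s<1, ((s<t and r>0) or (s>t and r>s−t)), ((s+t<1 and r<s) or (s+t>1 and r<1−t))}. Set Δ_{AA} = {(t,s,r,u) ∈ ℝ⁴ : (t,s,r) ∈ Δ_A, 1−t+2s−2r>0, 0<u<r} ∪ {(t,s,r,u) : (t,s,r) ∈ Γ, −1+t+r<u<r}, and Δ_{BB} = {(t,s,r,u) : (t,s,r) ∈ Γ, 0<u<−1+t+r}. With f_{AA} = 2(r−u)(1−t+2s−3r−u) and f_{BB} = 4(1−t)(1−t+s−2r), one has 12·(∫_{Δ_{AA}} f_{AA} + ∫_{Δ_{BB}} f_{BB}) = 221/2430, i.e. the sum of the two integrals equals 221/29160. -/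
open MeasureTheory

/-- Region `Γ` in ℝ³, coordinates `(t, s, r)`. -/
def GammaR : Set (ℝ × ℝ × ℝ) :=
  {p | 0 < p.1 ∧ p.1 < 1 ∧ -1 + p.1 + p.2.1 - 2 * p.2.2 > 0 ∧
       ((0 < p.2.1 ∧ p.2.1 < 1 ∧ p.2.1 + p.1 > 1 ∧ p.2.2 > 1 - p.1) ∨
        (1 < p.2.1 ∧ p.2.1 < 1 + p.1 ∧ p.2.2 > p.2.1 - p.1)) ∧
       1 - p.1 + 2 * p.2.1 - 2 * p.2.2 > 0}

/-- Region `Δ_{AA}` in ℝ⁴, coordinates `(t, s, r, u)`. -/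
def DeltaAA : Set (ℝ × ℝ × ℝ × ℝ) :=
  {p | ((p.1, p.2.1, p.2.2.1) ∈ DeltaA ∧
          1 - p.1 + 2 * p.2.1 - 2 * p.2.2.1 > 0 ∧ 0 < p.2.2.2 ∧ p.2.2.2 < p.2.2.1) ∨
       ((p.1, p.2.1, p.2.2.1) ∈ GammaR ∧
          -1 + p.1 + p.2.2.1 < p.2.2.2 ∧ p.2.2.2 < p.2.2.1)}

/-- Region `Δ_{BB}` in ℝ⁴, coordinates `(t, s, r, u)`. -/
def DeltaBB : Set (ℝ × ℝ × ℝ × ℝ) :=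
  {p | (p.1, p.2.1, p.2.2.1) ∈ GammaR ∧ 0 < p.2.2.2 ∧ p.2.2.2 < -1 + p.1 + p.2.2.1}

/-!
Integrating in the order `t, r, s, u` removes every case distinction. Away from the null sets
`s = t`, `s = 1 - t` and `s = 1`, the region `Δ_A` is
`0 < t < 1`, `0 < r < 1 - t`, `r < s < r + t`, and `Γ` is
`2/3 < t < 1`, `1 - t < r < 2t - 1`, `2r + 1 - t < s < r + t`.
Hence both integrals are sums of iterated integrals of polynomials with affine bounds, equal to
`1/180 + 17/29160` for `Δ_{AA}` and `7/4860` for `Δ_{BB}`.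
-/

theorem integral_eq_sum_of_eq_sum_mul_pow {n : ℕ} {f : ℝ → ℝ} (c : Fin n → ℝ)
    (hf : ∀ x, f x = ∑ i, c i * x ^ (i : ℕ)) (a b : ℝ) :
    ∫ x in a..b, f x =
      ∑ i : Fin n, c i * ((b ^ (i + 1 : ℕ) - a ^ (i + 1 : ℕ)) / (i + 1)) := by
  simp only [hf]
  rw [intervalIntegral.integral_finsetSum
    fun i _ => Continuous.intervalIntegrable (by fun_prop) a b]
  simp only [intervalIntegral.integral_const_mul, integral_pow]

section RegionBetween

variable {α E : Type*} [NormedAddCommGroup E] {f g : α → ℝ} {s : Set α}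

section Bounded

variable [PseudoMetricSpace α] [ProperSpace α]

theorem isBounded_regionBetween (hf : Continuous f) (hg : Continuous g)
    (hs : Bornology.IsBounded s) : Bornology.IsBounded (regionBetween f g s) := by
  have isBounded_image {h : α → ℝ} (hh : Continuous h) : Bornology.IsBounded (h '' s) :=
    (hs.isCompact_closure.image hh).isBounded.subset (Set.image_mono subset_closure)
  obtain ⟨m, hm⟩ := (isBounded_image hf).bddBelow
  obtain ⟨M, hM⟩ := (isBounded_image hg).bddAbove
  refine (hs.prod (Metric.isBounded_Icc m M)).subset ?_
  rintro ⟨x, y⟩ ⟨hx, hfy, hyg⟩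
  exact ⟨hx, (hm (Set.mem_image_of_mem f hx)).trans hfy.le,
    hyg.le.trans (hM (Set.mem_image_of_mem g hx))⟩

theorem integrableOn_of_continuous_of_isBounded [MeasurableSpace α] [OpensMeasurableSpace α]
    {μ : Measure α} [IsFiniteMeasureOnCompacts μ] {F : α → E} (hF : Continuous F)
    (hs : Bornology.IsBounded s) : IntegrableOn F s μ :=
  (hF.continuousOn.integrableOn_compact' hs.isCompact_closure
    isClosed_closure.measurableSet).mono_set subset_closure

end Bounded

variable [NormedSpace ℝ E]

theorem integral_indicator_regionBetween (hfg : ∀ x ∈ s, f x ≤ g x) (F : α × ℝ → E) (x : α) :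
    ∫ y, (regionBetween f g s).indicator F (x, y) =
      s.indicator (fun x => ∫ y in f x..g x, F (x, y)) x := by
  by_cases hx : x ∈ s
  · have fiber_indicator : (fun y => (regionBetween f g s).indicator F (x, y)) =
        (Set.Ioo (f x) (g x)).indicator fun y => F (x, y) := by
      ext y
      simp [Set.indicator, regionBetween, hx]
    rw [fiber_indicator, integral_indicator measurableSet_Ioo, Set.indicator_of_mem hx,
      intervalIntegral.integral_of_le (hfg x hx), integral_Ioc_eq_integral_Ioo]
  · simp [Set.indicator, regionBetween, hx]

variable [MeasurableSpace α] {μ : Measure α} {F : α × ℝ → E}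

theorem integrableOn_intervalIntegral_of_regionBetween (hf : Measurable f) (hg : Measurable g)
    (hs : MeasurableSet s) (hfg : ∀ x ∈ s, f x ≤ g x)
    (hF : IntegrableOn F (regionBetween f g s) (μ.prod volume)) :
    IntegrableOn (fun x => ∫ y in f x..g x, F (x, y)) s μ := by
  have hR := measurableSet_regionBetween hf hg hs
  have h := (hF.integrable_indicator hR).integral_prod_left
  simp only [integral_indicator_regionBetween hfg] at h
  exact (integrable_indicator_iff hs).1 h

theorem setIntegral_regionBetween [SFinite μ] (hf : Measurable f) (hg : Measurable g)
    (hs : MeasurableSet s) (hfg : ∀ x ∈ s, f x ≤ g x)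
    (hF : IntegrableOn F (regionBetween f g s) (μ.prod volume)) :
    ∫ p in regionBetween f g s, F p ∂μ.prod volume =
      ∫ x in s, (∫ y in f x..g x, F (x, y)) ∂μ := by
  have hR := measurableSet_regionBetween hf hg hs
  rw [← integral_indicator hR, integral_prod _ (hF.integrable_indicator hR),
    ← integral_indicator hs]
  simp only [integral_indicator_regionBetween hfg]

theorem setIntegral_iterated_regionBetween {a b : ℝ} (hab : a ≤ b) {f₁ g₁ : ℝ → ℝ}
    (hf₁ : Measurable f₁) (hg₁ : Measurable g₁) (hfg₁ : ∀ x ∈ Set.Ioo a b, f₁ x ≤ g₁ x)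
    {f₂ g₂ : ℝ × ℝ → ℝ} (hf₂ : Measurable f₂) (hg₂ : Measurable g₂)
    (hfg₂ : ∀ p ∈ regionBetween f₁ g₁ (Set.Ioo a b), f₂ p ≤ g₂ p)
    {f₃ g₃ : (ℝ × ℝ) × ℝ → ℝ} (hf₃ : Measurable f₃) (hg₃ : Measurable g₃)
    (hfg₃ : ∀ p ∈ regionBetween f₂ g₂ (regionBetween f₁ g₁ (Set.Ioo a b)), f₃ p ≤ g₃ p)
    {F : ((ℝ × ℝ) × ℝ) × ℝ → E} (hF : IntegrableOn F
      (regionBetween f₃ g₃ (regionBetween f₂ g₂ (regionBetween f₁ g₁ (Set.Ioo a b))))) :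
    ∫ p in regionBetween f₃ g₃ (regionBetween f₂ g₂ (regionBetween f₁ g₁ (Set.Ioo a b))), F p =
      ∫ x in a..b, ∫ y in f₁ x..g₁ x, ∫ z in f₂ (x, y)..g₂ (x, y),
        ∫ w in f₃ ((x, y), z)..g₃ ((x, y), z), F (((x, y), z), w) := by
  have hm₁ := measurableSet_regionBetween hf₁ hg₁ (measurableSet_Ioo (a := a) (b := b))
  have hm₂ := measurableSet_regionBetween hf₂ hg₂ hm₁
  have hF₃ := integrableOn_intervalIntegral_of_regionBetween hf₃ hg₃ hm₂ hfg₃ hF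
  have hF₂ := integrableOn_intervalIntegral_of_regionBetween hf₂ hg₂ hm₁ hfg₂ hF₃
  calc
    _ = ∫ p in regionBetween f₂ g₂ (regionBetween f₁ g₁ (Set.Ioo a b)),
          ∫ w in f₃ p..g₃ p, F (p, w) := setIntegral_regionBetween hf₃ hg₃ hm₂ hfg₃ hF
    _ = ∫ p in regionBetween f₁ g₁ (Set.Ioo a b), ∫ z in f₂ p..g₂ p,
          ∫ w in f₃ (p, z)..g₃ (p, z), F ((p, z), w) :=
        setIntegral_regionBetween hf₂ hg₂ hm₁ hfg₂ hF₃
    _ = _ := by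
        rw [intervalIntegral.integral_of_le hab, integral_Ioc_eq_integral_Ioo]
        exact setIntegral_regionBetween hf₁ hg₁ measurableSet_Ioo hfg₁ hF₂

end RegionBetween

theorem ae_snd_ne {α β : Type*} [MeasurableSpace α] [MeasurableSpace β] [MeasurableEq β]
    {μ : Measure α} {ν : Measure β} [SFinite ν] [NullSingletonClass ν] {φ : α → β}
    (hφ : Measurable φ) : ∀ᵐ p ∂μ.prod ν, p.2 ≠ φ p.1 := by
  refine (Measure.ae_prod_iff_ae_ae
    (measurableSet_eq_fun measurable_snd (hφ.comp measurable_fst)).compl).2 ?_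
  exact .of_forall fun x => Measure.ae_ne ν (φ x)

section Reordering

variable {α β γ δ : Type*}

/-- The reordering `(((t, r), s), u) ↦ (t, s, r, u)` of coordinates. The source is nested to the
left so that `regionBetween` can be iterated on it. -/
def reorderEquiv [MeasurableSpace α] [MeasurableSpace β] [MeasurableSpace γ]
    [MeasurableSpace δ] : ((α × γ) × β) × δ ≃ᵐ α × β × γ × δ :=
  MeasurableEquiv.prodAssoc.trans <| MeasurableEquiv.prodAssoc.trans <|
    (MeasurableEquiv.refl α).prodCongr <| MeasurableEquiv.prodAssoc.symm.trans <|
      (MeasurableEquiv.prodComm.prodCongr (.refl δ)).trans MeasurableEquiv.prodAssoc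

theorem volume_preserving_reorderEquiv [MeasureSpace α] [MeasureSpace β] [MeasureSpace γ]
    [MeasureSpace δ] [SFinite (volume : Measure α)] [SFinite (volume : Measure β)]
    [SFinite (volume : Measure γ)] [SFinite (volume : Measure δ)] :
    MeasurePreserving (reorderEquiv : ((α × γ) × β) × δ ≃ᵐ α × β × γ × δ) :=
  have swap_first : MeasurePreserving (Prod.map Prod.swap id : (γ × β) × δ → (β × γ) × δ) :=
    Measure.measurePreserving_swap.prod (.id volume)
  have swap_inner := volume_preserving_prodAssoc.comp
    (swap_first.comp (volume_preserving_prodAssoc.symm _))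
  (((MeasurePreserving.id volume).prod swap_inner).comp volume_preserving_prodAssoc).comp
    volume_preserving_prodAssoc

theorem continuous_reorderEquiv [MeasurableSpace α] [MeasurableSpace β] [MeasurableSpace γ]
    [MeasurableSpace δ] [TopologicalSpace α] [TopologicalSpace β] [TopologicalSpace γ]
    [TopologicalSpace δ] :
    Continuous (reorderEquiv : ((α × γ) × β) × δ ≃ᵐ α × β × γ × δ) := by
  change Continuous fun p : ((α × γ) × β) × δ => (p.1.1.1, p.1.2, p.1.1.2, p.2)
  fun_prop

end Reordering

/-- The region `Δ_A` without the null sets where two of its cases meet, in the coordinates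
`((t, r), s)`, in which every fibre is an interval. -/
def DeltaACell : Set ((ℝ × ℝ) × ℝ) :=
  regionBetween (fun q => q.2) (fun q => q.2 + q.1)
    (regionBetween (fun _ => 0) (fun t => 1 - t) (Set.Ioo 0 1))

/-- The region `Γ` without the null set where its two cases meet, in the coordinates
`((t, r), s)`, in which every fibre is an interval. -/
def GammaCell : Set ((ℝ × ℝ) × ℝ) :=
  regionBetween (fun q => 2 * q.2 + 1 - q.1) (fun q => q.2 + q.1)
    (regionBetween (fun t => 1 - t) (fun t => 2 * t - 1) (Set.Ioo (2 / 3) 1))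

theorem mem_DeltaACell {t r s : ℝ} :
    ((t, r), s) ∈ DeltaACell ↔ ((0 < t ∧ t < 1) ∧ 0 < r ∧ r < 1 - t) ∧ r < s ∧ s < r + t :=
  Iff.rfl

theorem mem_GammaCell {t r s : ℝ} :
    ((t, r), s) ∈ GammaCell ↔
      ((2 / 3 < t ∧ t < 1) ∧ 1 - t < r ∧ r < 2 * t - 1) ∧ 2 * r + 1 - t < s ∧ s < r + t :=
  Iff.rfl

theorem mem_DeltaA_iff_mem_DeltaACell {t s r : ℝ} (hst : s ≠ t) (hst' : s ≠ 1 - t) :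
    (t, s, r) ∈ DeltaA ↔ ((t, r), s) ∈ DeltaACell := by
  grind [DeltaA, mem_DeltaACell]

theorem mem_GammaR_iff_mem_GammaCell {t s r : ℝ} (hs : s ≠ 1) :
    (t, s, r) ∈ GammaR ↔ ((t, r), s) ∈ GammaCell := by
  grind [GammaR, mem_GammaCell]

theorem measurableSet_GammaCell : MeasurableSet GammaCell :=
  measurableSet_regionBetween (by fun_prop) (by fun_prop)
    (measurableSet_regionBetween (by fun_prop) (by fun_prop) measurableSet_Ioo)

theorem isBounded_DeltaACell : Bornology.IsBounded DeltaACell :=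
  isBounded_regionBetween (by fun_prop) (by fun_prop)
    (isBounded_regionBetween (by fun_prop) (by fun_prop) (Metric.isBounded_Ioo 0 1))

theorem isBounded_GammaCell : Bornology.IsBounded GammaCell :=
  isBounded_regionBetween (by fun_prop) (by fun_prop)
    (isBounded_regionBetween (by fun_prop) (by fun_prop) (Metric.isBounded_Ioo (2 / 3) 1))

/-- The part of `Δ_{AA}` over `Δ_A`, in the coordinates `(((t, r), s), u)`. -/
def DeltaAACellA : Set (((ℝ × ℝ) × ℝ) × ℝ) :=
  regionBetween (fun _ => 0) (fun q => q.1.2) DeltaACell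

/-- The part of `Δ_{AA}` over `Γ`, in the coordinates `(((t, r), s), u)`. -/
def DeltaAACellGamma : Set (((ℝ × ℝ) × ℝ) × ℝ) :=
  regionBetween (fun q => -1 + q.1.1 + q.1.2) (fun q => q.1.2) GammaCell

theorem disjoint_DeltaAACellA_DeltaAACellGamma : Disjoint DeltaAACellA DeltaAACellGamma := by
  rw [Set.disjoint_left]
  rintro ⟨⟨⟨t, r⟩, s⟩, u⟩ hA hΓ
  linarith [(mem_DeltaACell.1 hA.1).1.2.2, (mem_GammaCell.1 hΓ.1).1.2.1]

theorem ae_third_ne {φ : ℝ → ℝ} (hφ : Measurable φ) :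
    ∀ᵐ p : ((ℝ × ℝ) × ℝ) × ℝ, p.1.2 ≠ φ p.1.1.1 :=
  Measure.quasiMeasurePreserving_fst.ae (ae_snd_ne (hφ.comp measurable_fst))

theorem preimage_DeltaAA_ae_eq :
    reorderEquiv ⁻¹' DeltaAA =ᵐ[volume]
      (DeltaAACellA ∪ DeltaAACellGamma : Set (((ℝ × ℝ) × ℝ) × ℝ)) := by
  rw [Filter.eventuallyEq_set]
  filter_upwards [ae_third_ne (φ := fun t => t) (by fun_prop),
    ae_third_ne (φ := fun t => 1 - t) (by fun_prop),
    ae_third_ne (φ := fun _ => 1) (by fun_prop)] with ⟨⟨⟨t, r⟩, s⟩, u⟩ hst hst' hs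
  have hA := mem_DeltaA_iff_mem_DeltaACell (r := r) hst hst'
  have hΓ := mem_GammaR_iff_mem_GammaCell (t := t) (r := r) hs
  have bound_redundant (h : ((t, r), s) ∈ DeltaACell) : 1 - t + 2 * s - 2 * r > 0 := by
    obtain ⟨⟨⟨-, t_lt_one⟩, -⟩, r_lt_s, -⟩ := mem_DeltaACell.1 h
    linarith
  exact or_congr
    ⟨fun ⟨h, _, hu⟩ => ⟨hA.1 h, hu⟩, fun ⟨h, hu⟩ => ⟨hA.2 h, bound_redundant h, hu⟩⟩
    (and_congr_left' hΓ)

theorem preimage_DeltaBB_ae_eq :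
    reorderEquiv ⁻¹' DeltaBB =ᵐ[volume]
      regionBetween (fun _ => 0) (fun q => -1 + q.1.1 + q.1.2) GammaCell := by
  rw [Filter.eventuallyEq_set]
  filter_upwards [ae_third_ne (φ := fun _ => 1) (by fun_prop)] with ⟨⟨⟨t, r⟩, s⟩, u⟩ hs
  exact and_congr_left' (mem_GammaR_iff_mem_GammaCell hs)

theorem isBounded_DeltaAACellA : Bornology.IsBounded DeltaAACellA :=
  isBounded_regionBetween (by fun_prop) (by fun_prop) isBounded_DeltaACell

theorem isBounded_DeltaAACellGamma : Bornology.IsBounded DeltaAACellGamma :=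
  isBounded_regionBetween (by fun_prop) (by fun_prop) isBounded_GammaCell

theorem measurableSet_DeltaAACellGamma : MeasurableSet DeltaAACellGamma :=
  measurableSet_regionBetween (by fun_prop) (by fun_prop) measurableSet_GammaCell

section IteratedIntegrals

variable {E : Type*} [NormedAddCommGroup E] [NormedSpace ℝ E]

theorem setIntegral_regionBetween_DeltaACell {f g : (ℝ × ℝ) × ℝ → ℝ} (hf : Continuous f)
    (hg : Continuous g) (hfg : ∀ q ∈ DeltaACell, f q ≤ g q) {F : ((ℝ × ℝ) × ℝ) × ℝ → E}
    (hF : Continuous F) :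
    ∫ p in regionBetween f g DeltaACell, F p =
      ∫ t in 0..1, ∫ r in 0..(1 - t), ∫ s in r..(r + t),
        ∫ u in f ((t, r), s)..g ((t, r), s), F (((t, r), s), u) :=
  setIntegral_iterated_regionBetween zero_le_one (by fun_prop) (by fun_prop)
    (fun _ ht => by linarith [ht.2]) (by fun_prop) (by fun_prop)
    (fun _ hq => by linarith [hq.1.1]) hf.measurable hg.measurable hfg
    (integrableOn_of_continuous_of_isBounded hF
      (isBounded_regionBetween hf hg isBounded_DeltaACell))

theorem setIntegral_regionBetween_GammaCell {f g : (ℝ × ℝ) × ℝ → ℝ} (hf : Continuous f)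
    (hg : Continuous g) (hfg : ∀ q ∈ GammaCell, f q ≤ g q) {F : ((ℝ × ℝ) × ℝ) × ℝ → E}
    (hF : Continuous F) :
    ∫ p in regionBetween f g GammaCell, F p =
      ∫ t in (2 / 3)..1, ∫ r in (1 - t)..(2 * t - 1), ∫ s in (2 * r + 1 - t)..(r + t),
        ∫ u in f ((t, r), s)..g ((t, r), s), F (((t, r), s), u) :=
  setIntegral_iterated_regionBetween (by norm_num) (by fun_prop) (by fun_prop)
    (fun _ ht => by linarith [ht.1]) (by fun_prop) (by fun_prop)
    (fun _ hq => by linarith [hq.2.2]) hf.measurable hg.measurable hfg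
    (integrableOn_of_continuous_of_isBounded hF
      (isBounded_regionBetween hf hg isBounded_GammaCell))

theorem setIntegral_DeltaAA {F : ℝ × ℝ × ℝ × ℝ → E} (hF : Continuous F) :
    ∫ p in DeltaAA, F p =
      (∫ t in 0..1, ∫ r in 0..(1 - t), ∫ s in r..(r + t), ∫ u in 0..r, F (t, s, r, u)) +
        ∫ t in (2 / 3)..1, ∫ r in (1 - t)..(2 * t - 1), ∫ s in (2 * r + 1 - t)..(r + t),
          ∫ u in (-1 + t + r)..r, F (t, s, r, u) := by
  have hFe : Continuous fun p : ((ℝ × ℝ) × ℝ) × ℝ => F (reorderEquiv p) :=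
    hF.comp continuous_reorderEquiv
  rw [← volume_preserving_reorderEquiv.setIntegral_preimage_emb
      reorderEquiv.measurableEmbedding,
    setIntegral_congr_set preimage_DeltaAA_ae_eq,
    setIntegral_union disjoint_DeltaAACellA_DeltaAACellGamma measurableSet_DeltaAACellGamma
      (integrableOn_of_continuous_of_isBounded hFe isBounded_DeltaAACellA)
      (integrableOn_of_continuous_of_isBounded hFe isBounded_DeltaAACellGamma)]
  exact congr_arg₂ (· + ·)
    (setIntegral_regionBetween_DeltaACell (by fun_prop) (by fun_prop)
      (fun _ hq => hq.1.2.1.le) hFe)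
    (setIntegral_regionBetween_GammaCell (by fun_prop) (by fun_prop)
      (fun _ hq => by linarith [hq.1.1.2]) hFe)

theorem setIntegral_DeltaBB {F : ℝ × ℝ × ℝ × ℝ → E} (hF : Continuous F) :
    ∫ p in DeltaBB, F p =
      ∫ t in (2 / 3)..1, ∫ r in (1 - t)..(2 * t - 1), ∫ s in (2 * r + 1 - t)..(r + t),
        ∫ u in 0..(-1 + t + r), F (t, s, r, u) := by
  rw [← volume_preserving_reorderEquiv.setIntegral_preimage_emb
      reorderEquiv.measurableEmbedding,
    setIntegral_congr_set preimage_DeltaBB_ae_eq]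
  exact setIntegral_regionBetween_GammaCell (by fun_prop) (by fun_prop)
    (fun _ hq => by linarith [hq.1.2.1]) (hF.comp continuous_reorderEquiv)

end IteratedIntegrals

theorem iteratedIntegral_fAA_DeltaA :
    ∫ t in (0 : ℝ)..1, ∫ r in 0..(1 - t), ∫ s in r..(r + t), ∫ u in 0..r,
      2 * (r - u) * (1 - t + 2 * s - 3 * r - u) = 1 / 180 := by
  have integral_u (t r s : ℝ) : ∫ u in 0..r, 2 * (r - u) * (1 - t + 2 * s - 3 * r - u) =
      r ^ 2 * (1 - t + 2 * s - 10 / 3 * r) := by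
    rw [integral_eq_sum_of_eq_sum_mul_pow
      ![2 * r * (1 - t + 2 * s - 3 * r), -2 * (1 - t + 2 * s - 2 * r), 2]
      fun u => by simp [Fin.sum_univ_succ]; ring]
    simp [Fin.sum_univ_succ]; ring
  have integral_s (t r : ℝ) : ∫ s in r..(r + t), r ^ 2 * (1 - t + 2 * s - 10 / 3 * r) =
      t * r ^ 2 * (1 - 4 / 3 * r) := by
    rw [integral_eq_sum_of_eq_sum_mul_pow ![r ^ 2 * (1 - t - 10 / 3 * r), 2 * r ^ 2]
      fun s => by simp [Fin.sum_univ_succ]; ring]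
    simp [Fin.sum_univ_succ]; ring
  have integral_r (t : ℝ) : ∫ r in 0..(1 - t), t * r ^ 2 * (1 - 4 / 3 * r) =
      t ^ 2 * (1 - t) ^ 3 / 3 := by
    rw [integral_eq_sum_of_eq_sum_mul_pow ![0, 0, t, -4 / 3 * t]
      fun r => by simp [Fin.sum_univ_succ]; ring]
    simp [Fin.sum_univ_succ]; ring
  simp only [integral_u, integral_s, integral_r]
  rw [integral_eq_sum_of_eq_sum_mul_pow ![0, 0, 1 / 3, -1, 1, -1 / 3]
    fun t => by simp [Fin.sum_univ_succ]; ring]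
  norm_num [Fin.sum_univ_succ]

theorem iteratedIntegral_fAA_Gamma :
    ∫ t in (2 / 3 : ℝ)..1, ∫ r in (1 - t)..(2 * t - 1), ∫ s in (2 * r + 1 - t)..(r + t),
      ∫ u in (-1 + t + r)..r, 2 * (r - u) * (1 - t + 2 * s - 3 * r - u) = 17 / 29160 := by
  have integral_u (t r s : ℝ) :
      ∫ u in (-1 + t + r)..r, 2 * (r - u) * (1 - t + 2 * s - 3 * r - u) =
        (1 - t) ^ 2 * (5 / 3 * (1 - t) + 2 * s - 4 * r) := by
    rw [integral_eq_sum_of_eq_sum_mul_pow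
      ![2 * r * (1 - t + 2 * s - 3 * r), -2 * (1 - t + 2 * s - 2 * r), 2]
      fun u => by simp [Fin.sum_univ_succ]; ring]
    simp [Fin.sum_univ_succ]; ring
  have integral_s (t r : ℝ) :
      ∫ s in (2 * r + 1 - t)..(r + t), (1 - t) ^ 2 * (5 / 3 * (1 - t) + 2 * s - 4 * r) =
        (1 - t) ^ 2 * (2 * t - 1 - r) * (8 / 3 - 5 / 3 * t - r) := by
    rw [integral_eq_sum_of_eq_sum_mul_pow
      ![(1 - t) ^ 2 * (5 / 3 * (1 - t) - 4 * r), 2 * (1 - t) ^ 2]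
      fun s => by simp [Fin.sum_univ_succ]; ring]
    simp [Fin.sum_univ_succ]; ring
  have integral_r (t : ℝ) :
      ∫ r in (1 - t)..(2 * t - 1),
          (1 - t) ^ 2 * (2 * t - 1 - r) * (8 / 3 - 5 / 3 * t - r) =
        (1 - t) ^ 2 * (3 * t - 2) ^ 2 * (7 - 5 * t) / 6 := by
    rw [integral_eq_sum_of_eq_sum_mul_pow
      ![(1 - t) ^ 2 * (2 * t - 1) * (8 / 3 - 5 / 3 * t), -(1 - t) ^ 2 * (5 / 3 + t / 3),
        (1 - t) ^ 2]
      fun r => by simp [Fin.sum_univ_succ]; ring]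
    simp [Fin.sum_univ_succ]; ring
  simp only [integral_u, integral_s, integral_r]
  rw [integral_eq_sum_of_eq_sum_mul_pow ![14 / 3, -80 / 3, 359 / 6, -395 / 6, 71 / 2, -15 / 2]
    fun t => by simp [Fin.sum_univ_succ]; ring]
  norm_num [Fin.sum_univ_succ]

theorem iteratedIntegral_fBB_Gamma :
    ∫ t in (2 / 3 : ℝ)..1, ∫ r in (1 - t)..(2 * t - 1), ∫ s in (2 * r + 1 - t)..(r + t),
      ∫ _u in 0..(-1 + t + r), 4 * (1 - t) * (1 - t + s - 2 * r) = 7 / 4860 := by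
  have integral_s (t r : ℝ) :
      ∫ s in (2 * r + 1 - t)..(r + t), (-1 + t + r) * (4 * (1 - t) * (1 - t + s - 2 * r)) =
        2 * (1 - t) * (-1 + t + r) * (2 * t - 1 - r) * (3 - 2 * t - r) := by
    rw [integral_eq_sum_of_eq_sum_mul_pow
      ![4 * (1 - t) * (-1 + t + r) * (1 - t - 2 * r), 4 * (1 - t) * (-1 + t + r)]
      fun s => by simp [Fin.sum_univ_succ]; ring]
    simp [Fin.sum_univ_succ]; ring
  have integral_r (t : ℝ) :
      ∫ r in (1 - t)..(2 * t - 1),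
          2 * (1 - t) * (-1 + t + r) * (2 * t - 1 - r) * (3 - 2 * t - r) =
        (1 - t) * (3 * t - 2) ^ 3 * (6 - 5 * t) / 6 := by
    rw [integral_eq_sum_of_eq_sum_mul_pow
      ![-2 * (1 - t) ^ 2 * (2 * t - 1) * (3 - 2 * t),
        2 * (1 - t) * ((2 * t - 1) * (3 - 2 * t) + 2 * (1 - t)),
        -2 * (1 - t) * (3 - t), 2 * (1 - t)]
      fun r => by simp [Fin.sum_univ_succ]; ring]
    simp [Fin.sum_univ_succ]; ring
  simp only [intervalIntegral.integral_const, sub_zero, smul_eq_mul, integral_s, integral_r]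
  rw [integral_eq_sum_of_eq_sum_mul_pow ![-8, 152 / 3, -380 / 3, 156, -189 / 2, 45 / 2]
    fun t => by simp [Fin.sum_univ_succ]; ring]
  norm_num [Fin.sum_univ_succ]

/-- The computation `S(W^{E_C}_{••••}; C̃) = 221/2430`. -/
theorem S_WEC_Ctilde :
    12 * ((∫ p in DeltaAA,
            2 * (p.2.2.1 - p.2.2.2) *
              (1 - p.1 + 2 * p.2.1 - 3 * p.2.2.1 - p.2.2.2)) +
          (∫ p in DeltaBB,
            4 * (1 - p.1) * (1 - p.1 + p.2.1 - 2 * p.2.2.1))) = 221 / 2430 := by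
  rw [setIntegral_DeltaAA (by fun_prop), setIntegral_DeltaBB (by fun_prop),
    iteratedIntegral_fAA_DeltaA, iteratedIntegral_fAA_Gamma, iteratedIntegral_fBB_Gamma]
  norm_num
end

section
/- Define g₄ : [0,2] → ℝ by g₄(u) = (2−u)³ − 9(2−u)(1−u)² + 10(1−u)³ for 0 ≤ u ≤ 1 and g₄(u) = (2−u)³ for 1 ≤ u ≤ 2. Then there exists a unique real number ξ₀ such that ∫₀² (3u−2)·e^{−(3u−2)ξ₀}·g₄(u) du = 0; moreover 0.168 < ξ₀ < 0.169. -/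
open MeasureTheory intervalIntegral

/-- The volume function `g₄(u) = vol(π*O(1) − u E_S)` on the blow-up of the quintic
Del Pezzo fourfold `M₄` along the non-vertex-type plane `S`. -/
noncomputable def gFour (u : ℝ) : ℝ :=
  if u ≤ 1 then (2 - u) ^ 3 - 9 * (2 - u) * (1 - u) ^ 2 + 10 * (1 - u) ^ 3
  else (2 - u) ^ 3

/-! The function `F ξ = ∫ ℓ e^{-ℓξ} g` is minus the derivative of the Laplace transform
`∫ e^{-ℓξ} g`. Each `ξ ↦ p e^{-pξ}` with `p ≠ 0` is strictly decreasing, so `F` is strictly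
decreasing when `g ≥ 0`, and it is enough to locate a sign change of `F`. Expanding the exponential
turns `F ξ` into a finite combination of the moments `∫ ℓ^{i+1} g`, up to an explicit remainder.
For `ℓ u = 3u - 2` and `g = gFour` these moments are rational, and seven of them determine the signs
of `F` at `0.168` and `0.169`. -/

open Set
open scoped Nat

section PointwiseEstimates

lemma strictAnti_mul_exp_neg_mul {p : ℝ} (hp : p ≠ 0) :
    StrictAnti fun ξ : ℝ => p * Real.exp (-p * ξ) := by
  intro x y hxy
  rcases hp.lt_or_gt with hneg | hpos
  · exact mul_lt_mul_of_neg_left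
      (Real.exp_strictMono (mul_lt_mul_of_pos_left hxy (neg_pos.2 hneg))) hneg
  · exact mul_lt_mul_of_pos_left
      (Real.exp_strictMono (mul_lt_mul_of_neg_left hxy (neg_neg_of_pos hpos))) hpos

lemma antitone_mul_exp_neg_mul (p : ℝ) : Antitone fun ξ : ℝ => p * Real.exp (-p * ξ) := by
  rcases eq_or_ne p 0 with rfl | hp
  · simpa using antitone_const
  · exact (strictAnti_mul_exp_neg_mul hp).antitone

lemma abs_mul_exp_neg_mul_sub_sum_le {p L ξ : ℝ} {n : ℕ} (hp : |p| ≤ L) (hξ : L * |ξ| ≤ 1)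
    (hn : 0 < n) :
    |p * Real.exp (-p * ξ) - ∑ i ∈ Finset.range n, (-ξ) ^ i / i ! * p ^ (i + 1)| ≤
      L * ((L * |ξ|) ^ n * (n.succ / (n ! * n))) := by
  have exponent_le : |-p * ξ| ≤ L * |ξ| := by
    rw [abs_mul, abs_neg]
    gcongr
  have sum_eq : ∑ i ∈ Finset.range n, (-ξ) ^ i / i ! * p ^ (i + 1) =
      p * ∑ i ∈ Finset.range n, (-p * ξ) ^ i / i ! := by
    rw [Finset.mul_sum]
    refine Finset.sum_congr rfl fun i _ => ?_
    rw [neg_mul_comm, mul_pow]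
    ring
  rw [sum_eq, ← mul_sub, abs_mul]
  calc |p| * |Real.exp (-p * ξ) - ∑ i ∈ Finset.range n, (-p * ξ) ^ i / i !|
      ≤ |p| * (|-p * ξ| ^ n * (n.succ / (n ! * n))) := by
        gcongr
        exact Real.exp_bound (exponent_le.trans hξ) hn
    _ ≤ L * ((L * |ξ|) ^ n * (n.succ / (n ! * n))) := by
        gcongr
        exact (abs_nonneg p).trans hp

end PointwiseEstimates

/-- The first moment of `ℓ` against the density `g` on `[a, b]`, tilted by the weight `e^{-ℓξ}`.
It is minus the `ξ`-derivative of `∫ e^{-ℓξ} g`, so its zeros are the critical points of the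
H-functional `ξ ↦ log ∫ e^{-ℓξ} g`. -/
noncomputable def tiltedFirstMoment (ℓ g : ℝ → ℝ) (a b ξ : ℝ) : ℝ :=
  ∫ u in a..b, ℓ u * Real.exp (-ℓ u * ξ) * g u

section TiltedFirstMoment

variable {ℓ g : ℝ → ℝ} {a b : ℝ}

lemma continuous_tiltedFirstMoment (hℓ : Continuous ℓ) (hg : Continuous g) :
    Continuous (tiltedFirstMoment ℓ g a b) := by
  refine continuous_parametric_intervalIntegral_of_continuous' ?_ a b
  unfold Function.uncurry
  fun_prop

lemma strictAnti_tiltedFirstMoment (hℓ : Continuous ℓ) (hg : Continuous g) (hab : a < b)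
    (hg_nonneg : ∀ u ∈ Icc a b, 0 ≤ g u) (h_exists : ∃ u ∈ Icc a b, ℓ u ≠ 0 ∧ 0 < g u) :
    StrictAnti (tiltedFirstMoment ℓ g a b) := by
  intro x y hxy
  refine integral_lt_integral_of_continuousOn_of_le_of_exists_lt hab
    (by fun_prop) (by fun_prop) (fun u hu => ?_) ?_
  · exact mul_le_mul_of_nonneg_right (antitone_mul_exp_neg_mul (ℓ u) hxy.le)
      (hg_nonneg u (Ioc_subset_Icc_self hu))
  · obtain ⟨u, hu, hℓu, hgu⟩ := h_exists
    exact ⟨u, hu, mul_lt_mul_of_pos_right (strictAnti_mul_exp_neg_mul hℓu hxy) hgu⟩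

lemma integral_sum_mul_pow_mul (hℓ : Continuous ℓ) (hg : Continuous g) (n : ℕ) (c : ℕ → ℝ) :
    ∫ u in a..b, (∑ i ∈ Finset.range n, c i * ℓ u ^ (i + 1)) * g u =
      ∑ i ∈ Finset.range n, c i * ∫ u in a..b, ℓ u ^ (i + 1) * g u := by
  simp only [Finset.sum_mul, mul_assoc]
  rw [integral_finsetSum fun i _ => Continuous.intervalIntegrable (by fun_prop) a b]
  simp only [intervalIntegral.integral_const_mul]

lemma abs_tiltedFirstMoment_sub_sum_le {L ξ : ℝ} {n : ℕ} (hℓ : Continuous ℓ) (hg : Continuous g)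
    (hab : a ≤ b) (hL : ∀ u ∈ Icc a b, |ℓ u| ≤ L) (hξ : L * |ξ| ≤ 1) (hn : 0 < n) :
    |tiltedFirstMoment ℓ g a b ξ -
        ∑ i ∈ Finset.range n, (-ξ) ^ i / i ! * ∫ u in a..b, ℓ u ^ (i + 1) * g u| ≤
      L * ((L * |ξ|) ^ n * (n.succ / (n ! * n))) * ∫ u in a..b, |g u| := by
  rw [← integral_sum_mul_pow_mul hℓ hg, tiltedFirstMoment,
    ← integral_sub (Continuous.intervalIntegrable (by fun_prop) a b)
      (Continuous.intervalIntegrable (by fun_prop) a b),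
    ← intervalIntegral.integral_const_mul, ← Real.norm_eq_abs]
  refine norm_integral_le_of_norm_le hab (.of_forall fun u hu => ?_)
    (Continuous.intervalIntegrable (by fun_prop) a b)
  rw [← sub_mul, Real.norm_eq_abs, abs_mul]
  gcongr
  exact abs_mul_exp_neg_mul_sub_sum_le (hL u (Ioc_subset_Icc_self hu)) hξ hn

end TiltedFirstMoment

lemma integral_pow_mul_sum (a b : ℝ) (k : ℕ) {m : ℕ} (c : Fin m → ℝ) :
    ∫ x in a..b, x ^ k * ∑ j, c j * x ^ (j : ℕ) =
      ∑ j, c j * ((b ^ (k + j + 1) - a ^ (k + j + 1)) / (k + j + 1)) := by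
  have integrand_eq (x : ℝ) : x ^ k * ∑ j, c j * x ^ (j : ℕ) = ∑ j, c j * x ^ (k + j : ℕ) := by
    rw [Finset.mul_sum]
    exact Finset.sum_congr rfl fun j _ => by ring
  simp only [integrand_eq]
  rw [integral_finsetSum fun j _ => Continuous.intervalIntegrable (by fun_prop) a b]
  simp only [intervalIntegral.integral_const_mul, integral_pow, Nat.cast_add]

lemma integral_affine_pow_mul_of_eqOn_sum {α : ℝ} (hα : α ≠ 0) (β : ℝ) {a b : ℝ} (k : ℕ)
    {m : ℕ} {c : Fin m → ℝ} {f : ℝ → ℝ}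
    (hf : EqOn f (fun u => ∑ j, c j * (α * u - β) ^ (j : ℕ)) (uIcc a b)) :
    ∫ u in a..b, (α * u - β) ^ k * f u =
      α⁻¹ * ∑ j, c j *
        (((α * b - β) ^ (k + j + 1) - (α * a - β) ^ (k + j + 1)) / (k + j + 1)) := by
  rw [← integral_pow_mul_sum, ← smul_eq_mul α⁻¹, ← integral_comp_mul_sub _ hα]
  exact integral_congr fun u hu => congrArg _ (hf hu)

section GFour

lemma gFour_of_le_one {u : ℝ} (hu : u ≤ 1) : gFour u = u * (3 - 2 * u ^ 2) := by
  rw [gFour, if_pos hu]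
  ring

lemma gFour_of_one_le {u : ℝ} (hu : 1 ≤ u) : gFour u = (2 - u) ^ 3 := by
  rcases hu.eq_or_lt with rfl | hu
  · norm_num [gFour]
  · rw [gFour, if_neg hu.not_ge]

lemma continuous_gFour : Continuous gFour := by
  unfold gFour
  refine Continuous.if_le (by fun_prop) (by fun_prop) (by fun_prop) (by fun_prop) ?_
  rintro u rfl
  norm_num

lemma gFour_nonneg {u : ℝ} (hu : u ∈ Icc 0 2) : 0 ≤ gFour u := by
  rcases le_total u 1 with h | h
  · rw [gFour_of_le_one h]
    exact mul_nonneg hu.1 (by nlinarith [hu.1])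
  · rw [gFour_of_one_le h]
    exact pow_nonneg (sub_nonneg.2 hu.2) 3

lemma gFour_eqOn_sum_left :
    EqOn gFour (fun u => ∑ j, (![38 / 27, 3 / 27, -12 / 27, -2 / 27] : Fin 4 → ℝ) j *
      (3 * u - 2) ^ (j : ℕ)) (uIcc 0 1) := by
  intro u hu
  rw [uIcc_of_le zero_le_one] at hu
  simp only [gFour_of_le_one hu.2, Fin.sum_univ_four, Matrix.cons_val, Fin.coe_ofNat_eq_mod]
  ring

lemma gFour_eqOn_sum_right :
    EqOn gFour (fun u => ∑ j, (![64 / 27, -48 / 27, 12 / 27, -1 / 27] : Fin 4 → ℝ) j *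
      (3 * u - 2) ^ (j : ℕ)) (uIcc 1 2) := by
  intro u hu
  rw [uIcc_of_le one_le_two] at hu
  simp only [gFour_of_one_le hu.1, Fin.sum_univ_four, Matrix.cons_val, Fin.coe_ofNat_eq_mod]
  ring

lemma integral_pow_mul_gFour (k : ℕ) :
    ∫ u in (0 : ℝ)..2, (3 * u - 2) ^ k * gFour u =
      3⁻¹ * (∑ j, (![38 / 27, 3 / 27, -12 / 27, -2 / 27] : Fin 4 → ℝ) j *
          ((1 ^ (k + j + 1) - (-2) ^ (k + j + 1)) / (k + j + 1)) +
        ∑ j, (![64 / 27, -48 / 27, 12 / 27, -1 / 27] : Fin 4 → ℝ) j *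
          ((4 ^ (k + j + 1) - 1 ^ (k + j + 1)) / (k + j + 1))) := by
  have integrable (a b : ℝ) :
      IntervalIntegrable (fun u => (3 * u - 2) ^ k * gFour u) volume a b :=
    Continuous.intervalIntegrable (by have := continuous_gFour; fun_prop) a b
  rw [← integral_add_adjacent_intervals (integrable 0 1) (integrable 1 2),
    integral_affine_pow_mul_of_eqOn_sum three_ne_zero 2 k gFour_eqOn_sum_left,
    integral_affine_pow_mul_of_eqOn_sum three_ne_zero 2 k gFour_eqOn_sum_right, ← mul_add]
  norm_num only

lemma integral_abs_gFour : ∫ u in (0 : ℝ)..2, |gFour u| = 5 / 4 := by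
  calc ∫ u in (0 : ℝ)..2, |gFour u| = ∫ u in (0 : ℝ)..2, (3 * u - 2) ^ 0 * gFour u := by
        refine integral_congr fun u hu => ?_
        rw [uIcc_of_le zero_le_two] at hu
        simp [abs_of_nonneg (gFour_nonneg hu)]
    _ = 5 / 4 := by
        rw [integral_pow_mul_gFour]
        norm_num [Fin.sum_univ_succ]

lemma abs_tiltedFirstMoment_gFour_sub_sum_le {ξ : ℝ} (hξ : |ξ| ≤ 0.169) :
    |tiltedFirstMoment (fun u => 3 * u - 2) gFour 0 2 ξ -
        ∑ i ∈ Finset.range 7, (-ξ) ^ i / i ! *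
          ∫ u in (0 : ℝ)..2, (3 * u - 2) ^ (i + 1) * gFour u| ≤ 0.0001 := by
  have abs_le_four : ∀ u ∈ Icc (0 : ℝ) 2, |3 * u - 2| ≤ 4 := fun u hu =>
    abs_le.2 ⟨by linarith [hu.1], by linarith [hu.2]⟩
  refine (abs_tiltedFirstMoment_sub_sum_le (by fun_prop) continuous_gFour zero_le_two
    abs_le_four (by linarith) (by norm_num)).trans ?_
  rw [integral_abs_gFour]
  calc 4 * ((4 * |ξ|) ^ 7 * ((7 : ℕ).succ / (7 ! * (7 : ℕ)))) * (5 / 4 : ℝ)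
      ≤ 4 * ((4 * 0.169) ^ 7 * ((7 : ℕ).succ / (7 ! * (7 : ℕ)))) * (5 / 4) := by gcongr
    _ ≤ 0.0001 := by norm_num [Nat.factorial]

lemma tiltedFirstMoment_gFour_pos :
    0 < tiltedFirstMoment (fun u => 3 * u - 2) gFour 0 2 0.168 := by
  have taylor := abs_tiltedFirstMoment_gFour_sub_sum_le (ξ := 0.168) (by norm_num [abs_of_pos])
  have moments : 0.0001 < ∑ i ∈ Finset.range 7, (-0.168 : ℝ) ^ i / i ! *
      ∫ u in (0 : ℝ)..2, (3 * u - 2) ^ (i + 1) * gFour u := by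
    simp only [integral_pow_mul_gFour]
    norm_num [Finset.sum_range_succ, Fin.sum_univ_succ, Nat.factorial]
  linarith [(abs_le.1 taylor).1]

lemma tiltedFirstMoment_gFour_neg :
    tiltedFirstMoment (fun u => 3 * u - 2) gFour 0 2 0.169 < 0 := by
  have taylor := abs_tiltedFirstMoment_gFour_sub_sum_le (ξ := 0.169) (by norm_num [abs_of_pos])
  have moments : ∑ i ∈ Finset.range 7, (-0.169 : ℝ) ^ i / i ! *
      ∫ u in (0 : ℝ)..2, (3 * u - 2) ^ (i + 1) * gFour u < -0.0001 := by
    simp only [integral_pow_mul_gFour]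
    norm_num [Finset.sum_range_succ, Fin.sum_univ_succ, Nat.factorial]
  linarith [(abs_le.1 taylor).2]

lemma strictAnti_tiltedFirstMoment_gFour :
    StrictAnti (tiltedFirstMoment (fun u => 3 * u - 2) gFour 0 2) :=
  strictAnti_tiltedFirstMoment (by fun_prop) continuous_gFour two_pos (fun _ => gFour_nonneg)
    ⟨1, by norm_num, by norm_num, by norm_num [gFour]⟩

end GFour

/-- There is a unique real number `ξ₀` with
`∫₀² (3u−2)·e^{−(3u−2)ξ₀}·g₄(u) du = 0`, and it satisfies `0.168 < ξ₀ < 0.169`.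
This `ξ₀` is the soliton candidate on `M₄`. -/
theorem soliton_candidate_M4 :
    ∃ ξ₀ : ℝ,
      (∫ u in (0:ℝ)..2, (3 * u - 2) * Real.exp (-(3 * u - 2) * ξ₀) * gFour u) = 0 ∧
      0.168 < ξ₀ ∧ ξ₀ < 0.169 ∧
      ∀ ξ : ℝ,
        (∫ u in (0:ℝ)..2, (3 * u - 2) * Real.exp (-(3 * u - 2) * ξ) * gFour u) = 0 →
          ξ = ξ₀ := by
  have continuous_moment : Continuous (tiltedFirstMoment (fun u => 3 * u - 2) gFour 0 2) :=
    continuous_tiltedFirstMoment (by fun_prop) continuous_gFour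
  obtain ⟨ξ₀, ⟨h_lower, h_upper⟩, h_zero⟩ :=
    intermediate_value_Ioo' (by norm_num : (0.168 : ℝ) ≤ 0.169) continuous_moment.continuousOn
      ⟨tiltedFirstMoment_gFour_neg, tiltedFirstMoment_gFour_pos⟩
  exact ⟨ξ₀, h_zero, h_lower, h_upper, fun ξ hξ =>
    strictAnti_tiltedFirstMoment_gFour.injective (Eq.trans hξ h_zero.symm)⟩
end
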